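/- Let V ⊂ (ℂ*)² be an algebraic curve homeomorphic to a sphere with 3 punctures. Then there exists a multiplicative group endomorphism M : (ℂ*)² → (ℂ*)² and a line ℂΛ = {(z₁,z₂) ∈ (ℂ*)² : b₁z₁ + b₂z₂ + b₀ = 0} with b₀, b₁, b₂ ∈ ℂ* such that V = M(ℂΛ). -/

import Mathlib

open Set Filter Topology Metric
open Polynomial (C X derivative)
open scoped Polynomial Polynomial.Bivariate

theorem Convex.isSimplyConnected {U : Set ℂ} (hU : Convex ℝ U) (hne : U.Nonempty) :
    IsSimplyConnected U := by
  have := hU.contractibleSpace hne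
  exact (inferInstance : SimplyConnectedSpace U)

/-- `F` winds `n` times around the origin along the circle of centre `p` and radius `r`. -/
def HasWinding (F : ℂ → ℂ) (p : ℂ) (r : ℝ) (n : ℤ) : Prop :=
  ∃ g : ℂ → ℂ, ContinuousOn g (sphere p r) ∧
    ∀ t ∈ sphere p r, F t = (t - p) ^ n * Complex.exp (g t)

theorem sub_ne_zero_of_mem_sphere {p t : ℂ} {r : ℝ} (hr : 0 < r) (ht : t ∈ sphere p r) :
    t - p ≠ 0 :=
  sub_ne_zero.2 (ne_of_mem_sphere ht hr.ne')

theorem HasWinding.congr {F G : ℂ → ℂ} {p : ℂ} {r : ℝ} {n : ℤ} (h : HasWinding F p r n)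
    (hFG : ∀ t ∈ sphere p r, G t = F t) : HasWinding G p r n := by
  obtain ⟨g, hg, h⟩ := h
  exact ⟨g, hg, fun t ht => (hFG t ht).trans (h t ht)⟩

theorem HasWinding.mul {F G : ℂ → ℂ} {p : ℂ} {r : ℝ} {m n : ℤ} (hr : 0 < r)
    (hF : HasWinding F p r m) (hG : HasWinding G p r n) :
    HasWinding (fun t => F t * G t) p r (m + n) := by
  obtain ⟨f, hf, hF⟩ := hF
  obtain ⟨g, hg, hG⟩ := hG
  refine ⟨fun t => f t + g t, hf.add hg, fun t ht => ?_⟩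
  beta_reduce
  rw [hF t ht, hG t ht, zpow_add₀ (sub_ne_zero_of_mem_sphere hr ht), Complex.exp_add]
  ring

theorem HasWinding.zpow {F : ℂ → ℂ} {p : ℂ} {r : ℝ} {m : ℤ} (hF : HasWinding F p r m) (k : ℤ) :
    HasWinding (fun t => F t ^ k) p r (m * k) := by
  obtain ⟨f, hf, hF⟩ := hF
  refine ⟨fun t => k * f t, continuousOn_const.mul hf, fun t ht => ?_⟩
  beta_reduce
  rw [hF t ht, mul_zpow, ← zpow_mul, Complex.exp_int_mul]

theorem hasWinding_exp {g : ℂ → ℂ} {p : ℂ} {r : ℝ} (hg : ContinuousOn g (sphere p r)) :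
    HasWinding (fun t => Complex.exp (g t)) p r 0 :=
  ⟨g, hg, fun t _ => by simp⟩

theorem hasWinding_const {c : ℂ} (hc : c ≠ 0) (p : ℂ) (r : ℝ) :
    HasWinding (fun _ => c) p r 0 :=
  ⟨fun _ => Complex.log c, continuousOn_const, fun t _ => by simp [Complex.exp_log hc]⟩

theorem hasWinding_sub_center (p : ℂ) (r : ℝ) : HasWinding (fun t => t - p) p r 1 :=
  ⟨fun _ => 0, continuousOn_const, fun t _ => by simp⟩

theorem HasWinding.of_norm_sub_lt {F G : ℂ → ℂ} {p : ℂ} {r : ℝ} {n : ℤ}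
    (hG : HasWinding G p r n) (hFc : ContinuousOn F (sphere p r))
    (hGc : ContinuousOn G (sphere p r))
    (h : ∀ t ∈ sphere p r, ‖F t - G t‖ < ‖G t‖) : HasWinding F p r n := by
  obtain ⟨g, hg, hG⟩ := hG
  have hG0 : ∀ t ∈ sphere p r, G t ≠ 0 := fun t ht h0 => by
    have := h t ht
    rw [h0, norm_zero] at this
    exact absurd this (norm_nonneg _).not_gt
  have hs : ∀ t ∈ sphere p r, F t / G t ∈ Complex.slitPlane := fun t ht => by
    have h1 : F t / G t = 1 + (F t - G t) / G t := by
      rw [sub_div, div_self (hG0 t ht)]; ring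
    rw [h1]
    refine Complex.mem_slitPlane_of_norm_lt_one ?_
    rw [norm_div, div_lt_one (norm_pos_iff.2 (hG0 t ht))]
    exact h t ht
  refine ⟨fun t => g t + Complex.log (F t / G t), hg.add ((hFc.div hGc hG0).clog hs),
    fun t ht => ?_⟩
  rw [Complex.exp_add, Complex.exp_log (Complex.slitPlane_ne_zero (hs t ht)), ← mul_assoc,
    ← hG t ht, mul_div_cancel₀ _ (hG0 t ht)]

theorem hasWinding_sub_of_inside {p q : ℂ} {r : ℝ} (h : ‖q - p‖ < r) :
    HasWinding (fun t => t - q) p r 1 := by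
  refine (hasWinding_sub_center p r).of_norm_sub_lt (by fun_prop) (by fun_prop) fun t ht => ?_
  have : ‖t - p‖ = r := by simpa [dist_eq_norm] using ht
  rw [this, show t - q - (t - p) = -(q - p) by ring, norm_neg]
  exact h

theorem hasWinding_sub_of_outside {p q : ℂ} {r : ℝ} (hr : 0 ≤ r) (h : r < ‖q - p‖) :
    HasWinding (fun t => t - q) p r 0 := by
  refine (hasWinding_const (c := p - q) ?_ p r).of_norm_sub_lt (by fun_prop) (by fun_prop)
    fun t ht => ?_
  · intro h0
    rw [← norm_neg, neg_sub, h0, norm_zero] at h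
    linarith
  have : ‖t - p‖ = r := by simpa [dist_eq_norm] using ht
  rw [show t - q - (p - q) = t - p by ring, this, norm_sub_rev]
  exact h

theorem eq_zero_of_zpow_eq_exp {g : ℂ → ℂ} {p : ℂ} {r : ℝ} (hr : 0 < r) {n : ℤ}
    (hg : ContinuousOn g (sphere p r))
    (h : ∀ t ∈ sphere p r, (t - p) ^ n = Complex.exp (g t)) : n = 0 := by
  let γ : ℝ → ℂ := circleMap p r
  have hγ : ∀ θ, γ θ ∈ sphere p r := fun θ => circleMap_mem_sphere p hr.le θ
  have hcont : Continuous fun θ : ℝ => g (γ θ) - n * (θ * Complex.I) - n * Complex.log r :=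
    (((hg.comp_continuous (continuous_circleMap p r) hγ).sub (by fun_prop)).sub
      continuous_const)
  have hexp : ∀ θ : ℝ, ∃ k : ℤ,
      g (γ θ) - n * (θ * Complex.I) - n * Complex.log r = k * (2 * Real.pi * Complex.I) := by
    intro θ
    rw [← Complex.exp_eq_one_iff, Complex.exp_sub, Complex.exp_sub, ← h _ (hγ θ),
      Complex.exp_int_mul, Complex.exp_int_mul, Complex.exp_log (by exact_mod_cast hr.ne')]
    have : γ θ - p = r * Complex.exp (θ * Complex.I) := by simp [γ, circleMap]
    rw [this, mul_zpow]
    have h1 : (r : ℂ) ^ n ≠ 0 := zpow_ne_zero _ (by exact_mod_cast hr.ne')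
    have h2 : Complex.exp (θ * Complex.I) ^ n ≠ 0 := zpow_ne_zero _ (Complex.exp_ne_zero _)
    field_simp
  choose k hk using hexp
  have hpi : (2 * Real.pi * Complex.I : ℂ) ≠ 0 := Complex.two_pi_I_ne_zero
  have hkc : Continuous k := by
    have hc : Continuous fun θ : ℝ => ((k θ : ℤ) : ℂ) := by
      have : (fun θ : ℝ => ((k θ : ℤ) : ℂ)) = fun θ : ℝ =>
          (g (γ θ) - n * (θ * Complex.I) - n * Complex.log r) / (2 * Real.pi * Complex.I) := by
        funext θ
        rw [hk θ, mul_div_cancel_right₀ _ hpi]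
      rw [this]
      exact hcont.div_const _
    exact Int.isClosedEmbedding_coe_real.isEmbedding.continuous_iff.2
      (by simpa [Function.comp_def] using Complex.continuous_re.comp hc)
  have hconst : k 0 = k (2 * Real.pi) := PreconnectedSpace.constant inferInstance hkc
  have h0 := hk 0
  have h1 := hk (2 * Real.pi)
  have hγ' : γ (2 * Real.pi) = γ 0 := by simp [γ, circleMap]
  rw [hγ', ← hconst, ← h0] at h1
  push_cast at h1
  have : (n : ℂ) * (2 * Real.pi * Complex.I) = 0 := by linear_combination -h1
  simpa [hpi, Real.pi_ne_zero] using this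

theorem HasWinding.unique {F : ℂ → ℂ} {p : ℂ} {r : ℝ} {m n : ℤ} (hr : 0 < r)
    (hm : HasWinding F p r m) (hn : HasWinding F p r n) : m = n := by
  obtain ⟨f, hf, hF⟩ := hm
  obtain ⟨g, hg, hG⟩ := hn
  have := eq_zero_of_zpow_eq_exp (n := m - n) hr (hg.sub hf) fun t ht => by
    have h0 := sub_ne_zero_of_mem_sphere hr ht
    have h1 := (hF t ht).symm.trans (hG t ht)
    have h2 := Complex.exp_ne_zero (f t)
    have h3 := zpow_ne_zero n h0
    rw [zpow_sub₀ h0, Pi.sub_apply, Complex.exp_sub]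
    field_simp
    linear_combination h1
  lia

/-- On a punctured disc, a nonvanishing continuous function is a power times an exponential. -/
theorem exists_zpow_mul_exp_of_punctured_ball {F : ℂ → ℂ} {p : ℂ} {r : ℝ} (hr : 0 < r)
    (hF : ContinuousOn F (ball p r \ {p})) (h0 : ∀ t ∈ ball p r \ {p}, F t ≠ 0) :
    ∃ (n : ℤ) (g : ℂ → ℂ), ContinuousOn g (ball p r \ {p}) ∧
      ∀ t ∈ ball p r \ {p}, F t = (t - p) ^ n * Complex.exp (g t) := by
  let H : Set ℂ := {ζ | ζ.re < Real.log r}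
  have hmaps : ∀ ζ ∈ H, p + Complex.exp ζ ∈ ball p r \ {p} := by
    intro ζ hζ
    refine ⟨?_, by simp⟩
    rw [mem_ball, dist_eq_norm, add_sub_cancel_left, Complex.norm_exp]
    exact (Real.lt_log_iff_exp_lt hr).1 hζ
  have hlogH : ∀ t ∈ ball p r \ {p}, ∀ ζ, Complex.exp ζ = t - p → ζ ∈ H := by
    intro t ht ζ hζ
    have h1 : ‖t - p‖ < r := by simpa [dist_eq_norm] using ht.1
    rw [← hζ, Complex.norm_exp] at h1
    exact (Real.lt_log_iff_exp_lt hr).2 h1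
  have hHconv : Convex ℝ H := convex_halfSpace_re_lt _
  have hHopen : IsOpen H := isOpen_lt Complex.continuous_re continuous_const
  have hHne : H.Nonempty := ⟨(Real.log r - 1 : ℝ), by simp [H]⟩
  have hsc : IsSimplyConnected H := hHconv.isSimplyConnected hHne
  obtain ⟨G, hG, hGF⟩ := Complex.exists_continuousOn_eqOn_exp_comp hsc hHopen
    (g := fun ζ => F (p + Complex.exp ζ))
    (hF.comp (by fun_prop) hmaps) (by
      rintro ⟨ζ, hζ, h⟩
      exact h0 _ (hmaps ζ hζ) h)
  have hGF' : ∀ ζ ∈ H, Complex.exp (G ζ) = F (p + Complex.exp ζ) := fun ζ hζ => hGF hζ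
  have hpi : (2 * Real.pi * Complex.I : ℂ) ≠ 0 := Complex.two_pi_I_ne_zero
  have hshift : ∀ ζ ∈ H, ζ + 2 * Real.pi * Complex.I ∈ H := fun ζ hζ => by
    simpa [H] using hζ
  have hper : ∀ ζ ∈ H, ∃ k : ℤ, G (ζ + 2 * Real.pi * Complex.I) = G ζ
      + k * (2 * Real.pi * Complex.I) := by
    intro ζ hζ
    rw [← Complex.exp_eq_exp_iff_exists_int, hGF' _ (hshift ζ hζ), hGF' _ hζ,
      Complex.exp_periodic]
  obtain ⟨n, hn⟩ : ∃ n : ℤ, ∀ ζ ∈ H, G (ζ + 2 * Real.pi * Complex.I) = G ζ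
      + n * (2 * Real.pi * Complex.I) := by
    choose! k hk using hper
    have hkc : ContinuousOn k H := by
      have hc : ContinuousOn (fun ζ => ((k ζ : ℤ) : ℂ)) H := by
        have : ContinuousOn (fun ζ => (G (ζ + 2 * Real.pi * Complex.I) - G ζ) /
            (2 * Real.pi * Complex.I)) H :=
          ((hG.comp (by fun_prop) hshift).sub hG).div_const _
        refine this.congr fun ζ hζ => ?_
        simp only
        rw [hk ζ hζ, add_sub_cancel_left, mul_div_cancel_right₀ _ hpi]
      refine Int.isClosedEmbedding_coe_real.isEmbedding.continuousOn_iff.2 ?_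
      simpa [Function.comp_def] using Complex.continuous_re.comp_continuousOn hc
    obtain ⟨ζ₀, hζ₀⟩ := hHne
    refine ⟨k ζ₀, fun ζ hζ => ?_⟩
    rw [hk ζ hζ, hHconv.isPreconnected.constant hkc hζ hζ₀]
  let K : ℂ → ℂ := fun ζ => G ζ - n * ζ
  have hKper : ∀ ζ ∈ H, K (ζ + 2 * Real.pi * Complex.I) = K ζ := fun ζ hζ => by
    simp only [K]; rw [hn ζ hζ]; ring
  have hKnat : ∀ (j : ℕ), ∀ ζ ∈ H, K (ζ + j * (2 * Real.pi * Complex.I)) = K ζ := by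
    intro j
    induction j with
    | zero => intro ζ _; simp
    | succ j ih =>
      intro ζ hζ
      rw [← ih ζ hζ, ← hKper (ζ + j * (2 * Real.pi * Complex.I)) (by simpa [H] using hζ)]
      congr 1; push_cast; ring
  have hKint : ∀ (j : ℤ), ∀ ζ ∈ H, K (ζ + j * (2 * Real.pi * Complex.I)) = K ζ := by
    intro j ζ hζ
    obtain ⟨i, rfl | rfl⟩ := j.eq_nat_or_neg
    · exact_mod_cast hKnat i ζ hζ
    · rw [← hKnat i (ζ + ((-(i : ℤ) : ℤ) : ℂ) * (2 * Real.pi * Complex.I)) (by simpa [H] using hζ)]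
      congr 1; push_cast; ring
  have hKeq : ∀ t ∈ ball p r \ {p}, ∀ ζ, Complex.exp ζ = t - p → K (Complex.log (t - p)) = K ζ := by
    intro t ht ζ hζ
    have hlog := Complex.exp_log (sub_ne_zero.2 ht.2)
    obtain ⟨j, hj⟩ := Complex.exp_eq_exp_iff_exists_int.1 (hlog.trans hζ.symm)
    rw [hj, hKint j ζ (hlogH t ht ζ hζ)]
  refine ⟨n, fun t => K (Complex.log (t - p)), ?_, fun t ht => ?_⟩
  · intro t₀ ht₀
    have ht₀' : t₀ - p ≠ 0 := sub_ne_zero.2 ht₀.2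
    let Z : ℂ → ℂ := fun t => Complex.log ((t - p) / (t₀ - p)) + Complex.log (t₀ - p)
    have hZexp : ∀ t, t ≠ p → Complex.exp (Z t) = t - p := fun t ht => by
      simp only [Z]
      rw [Complex.exp_add, Complex.exp_log ht₀', Complex.exp_log
        (div_ne_zero (sub_ne_zero.2 ht) ht₀'), div_mul_cancel₀ _ ht₀']
    have hZc : ContinuousAt Z t₀ := by
      refine ContinuousAt.add (ContinuousAt.clog (by fun_prop) ?_) continuousAt_const
      rw [div_self ht₀']; exact Complex.one_mem_slitPlane
    have hKc : ContinuousAt K (Z t₀) := by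
      refine ContinuousAt.sub (hG.continuousAt (hHopen.mem_nhds
        (hlogH t₀ ht₀ _ (hZexp t₀ ht₀.2)))) (by fun_prop)
    have : ContinuousAt (fun t => K (Z t)) t₀ := ContinuousAt.comp' hKc hZc
    refine this.continuousWithinAt.congr (fun t ht => hKeq t ht _ (hZexp t ht.2))
      (hKeq t₀ ht₀ _ (hZexp t₀ ht₀.2))
  · have ht' : t - p ≠ 0 := sub_ne_zero.2 ht.2
    have hlog := Complex.exp_log ht'
    simp only [K]
    rw [Complex.exp_sub, hGF' _ (hlogH t ht _ hlog), Complex.exp_int_mul, hlog,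
      add_sub_cancel, mul_div_cancel₀ _ (zpow_ne_zero _ ht')]

theorem exists_exp_eq_of_convex {U : Set ℂ} (hU : Convex ℝ U) (hUo : IsOpen U) {F : ℂ → ℂ}
    (hF : ContinuousOn F U) (h0 : ∀ t ∈ U, F t ≠ 0) :
    ∃ g : ℂ → ℂ, ContinuousOn g U ∧ ∀ t ∈ U, F t = Complex.exp (g t) := by
  rcases U.eq_empty_or_nonempty with rfl | hne
  · exact ⟨fun _ => 0, continuousOn_const, by simp⟩
  obtain ⟨g, hg, h⟩ := Complex.exists_continuousOn_eqOn_exp_comp (hU.isSimplyConnected hne) hUo hF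
    (by rintro ⟨t, ht, h⟩; exact h0 t ht h)
  exact ⟨g, hg, fun t ht => (h ht).symm⟩

/-- A nonvanishing continuous function on a finitely punctured convex open set is a product of
powers of the `t - p` (`p` a puncture) and an exponential. -/
theorem exists_prod_zpow_mul_exp {U : Set ℂ} (hU : Convex ℝ U) (hUo : IsOpen U) (P : Finset ℂ)
    (hPU : ↑P ⊆ U) {F : ℂ → ℂ} (hF : ContinuousOn F (U \ P)) (h0 : ∀ t ∈ U \ P, F t ≠ 0) :
    ∃ (n : ℂ → ℤ) (g : ℂ → ℂ), ContinuousOn g (U \ P) ∧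
      ∀ t ∈ U \ P, F t = (∏ p ∈ P, (t - p) ^ n p) * Complex.exp (g t) := by
  classical
  induction P using Finset.induction_on generalizing F with
  | empty =>
    obtain ⟨g, hg, h⟩ := exists_exp_eq_of_convex hU hUo (F := F) (by simpa using hF)
      (by simpa using h0)
    exact ⟨fun _ => 0, g, by simpa using hg, by simpa using h⟩
  | insert p P hp ih =>
    rw [Finset.coe_insert, insert_subset_iff] at hPU
    have hopen : IsOpen (U \ (P : Set ℂ)) := hUo.sdiff P.finite_toSet.isClosed
    obtain ⟨r, hr, hball⟩ := Metric.isOpen_iff.1 hopen p ⟨hPU.1, by simpa using hp⟩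
    have hsub : ball p r \ {p} ⊆ U \ ↑(insert p P) := fun t ht => by
      have := hball ht.1
      simp only [Finset.coe_insert, Set.mem_sdiff, mem_insert_iff, not_or]
      exact ⟨this.1, ht.2, this.2⟩
    obtain ⟨n, g₀, hg₀, hg₀F⟩ := exists_zpow_mul_exp_of_punctured_ball hr (hF.mono hsub)
      fun t ht => h0 t (hsub ht)
    let χ : ℂ → ℝ := fun t => max 0 (min 1 (2 - 3 * ‖t - p‖ / r))
    have hχ : Continuous χ := by fun_prop
    have hχ1 : ∀ t, ‖t - p‖ < r / 3 → χ t = 1 := fun t ht => by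
      have : 3 * ‖t - p‖ / r ≤ 1 := by rw [div_le_one hr]; linarith
      simp only [χ]
      rw [min_eq_left (by linarith), max_eq_right zero_le_one]
    have hχ0 : ∀ t, 2 * r / 3 < ‖t - p‖ → χ t = 0 := fun t ht => by
      have : 2 ≤ 3 * ‖t - p‖ / r := by rw [le_div_iff₀ hr]; linarith
      simp only [χ]
      exact max_eq_left ((min_le_right _ _).trans (by linarith))
    let k : ℂ → ℂ := fun t => χ t * (if t ∈ ball p r then g₀ t else 0)
    have hk : ∀ t, t ≠ p → ContinuousAt k t := by
      intro t ht
      by_cases htr : t ∈ ball p r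
      · have h1 : ContinuousAt (fun t => χ t * g₀ t : ℂ → ℂ) t := by
          refine ContinuousAt.mul (by fun_prop) (hg₀.continuousAt ?_)
          exact (isOpen_ball.sdiff isClosed_singleton).mem_nhds ⟨htr, ht⟩
        refine h1.congr ?_
        filter_upwards [isOpen_ball.mem_nhds htr] with s hs
        simp [k, show dist s p < r from hs]
      · have h1 : ContinuousAt (fun _ => 0 : ℂ → ℂ) t := continuousAt_const
        refine h1.congr ?_
        have h2 : 2 * r / 3 < ‖t - p‖ := by
          rw [mem_ball, dist_eq_norm, not_lt] at htr
          linarith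
        have h3 : ContinuousAt (fun t => ‖t - p‖) t := by fun_prop
        filter_upwards [h3.eventually_const_lt h2] with s hs
        simp [k, hχ0 s hs]
    let F' : ℂ → ℂ := fun t => if t = p then 1 else F t * (t - p) ^ (-n) * Complex.exp (-k t)
    have hF'1 : ∀ t ∈ ball p (r / 3), F' t = 1 := by
      intro t ht
      by_cases htp : t = p
      · simp [F', htp]
      have htn : ‖t - p‖ < r / 3 := by simpa [dist_eq_norm] using ht
      have htr : t ∈ ball p r := by
        rw [mem_ball, dist_eq_norm]; linarith
      have hz : (t - p) ^ n ≠ 0 := zpow_ne_zero _ (sub_ne_zero.2 htp)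
      simp only [F', htp, if_false, k, hχ1 t htn, htr, if_true]
      rw [hg₀F t ⟨htr, htp⟩, zpow_neg, Complex.exp_neg, Complex.ofReal_one, one_mul]
      have := Complex.exp_ne_zero (g₀ t)
      field_simp
    have hF'c : ContinuousOn F' (U \ P) := by
      intro t ht
      by_cases htp : t = p
      · subst htp
        refine ContinuousAt.continuousWithinAt (continuousAt_const (y := (1 : ℂ)) |>.congr ?_)
        filter_upwards [ball_mem_nhds t (by linarith : 0 < r / 3)] with s hs
        exact (hF'1 s hs).symm
      · have htm : t ∈ U \ ↑(insert p P) := by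
          simp only [Finset.coe_insert, Set.mem_sdiff, mem_insert_iff, not_or]
          exact ⟨ht.1, htp, ht.2⟩
        have hFt : ContinuousAt F t :=
          hF.continuousAt ((hUo.sdiff (insert p P).finite_toSet.isClosed).mem_nhds htm)
        have hz : ContinuousAt (fun s => (s - p) ^ (-n)) t :=
          ContinuousAt.zpow₀ (f := fun s => s - p) (by fun_prop) _ (Or.inl (sub_ne_zero.2 htp))
        have he : ContinuousAt (fun s => Complex.exp (-k s)) t := (hk t htp).neg.cexp
        have h1 : ContinuousAt (fun t => F t * (t - p) ^ (-n) * Complex.exp (-k t)) t :=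
          (hFt.mul hz).mul he
        refine (h1.congr ?_).continuousWithinAt
        filter_upwards [isOpen_ne.mem_nhds htp] with s hs
        simp only [F']
        rw [if_neg hs]
    have hF'0 : ∀ t ∈ U \ (P : Set ℂ), F' t ≠ 0 := by
      intro t ht
      by_cases htp : t = p
      · simp [F', htp]
      have htm : t ∈ U \ ↑(insert p P) := by
        simp only [Finset.coe_insert, Set.mem_sdiff, mem_insert_iff, not_or]
        exact ⟨ht.1, htp, ht.2⟩
      simp only [F', htp, if_false]
      exact mul_ne_zero (mul_ne_zero (h0 t htm) (zpow_ne_zero _ (sub_ne_zero.2 htp)))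
        (Complex.exp_ne_zero _)
    obtain ⟨n', g', hg', h⟩ := ih hPU.2 hF'c hF'0
    have hsub' : U \ ↑(insert p P) ⊆ U \ (P : Set ℂ) :=
      sdiff_subset_sdiff_right (by simp)
    refine ⟨Function.update n' p n, fun t => g' t + k t,
      (hg'.mono hsub').add fun t ht => (hk t ?_).continuousWithinAt, fun t ht => ?_⟩
    · rintro rfl; simp at ht
    · have htp : t ≠ p := by rintro rfl; simp at ht
      have h1 := h t (hsub' ht)
      rw [Finset.prod_insert hp, Function.update_self]
      have h2 : ∏ q ∈ P, (t - q) ^ Function.update n' p n q = ∏ q ∈ P, (t - q) ^ n' q :=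
        Finset.prod_congr rfl fun q hq => by
          rw [Function.update_of_ne (by rintro rfl; exact hp hq)]
      rw [h2, Complex.exp_add]
      simp only [F', htp, if_false] at h1
      have hz : (t - p) ^ n ≠ 0 := zpow_ne_zero _ (sub_ne_zero.2 htp)
      have he := Complex.exp_ne_zero (k t)
      rw [zpow_neg, Complex.exp_neg] at h1
      field_simp at h1
      linear_combination h1

theorem hasWinding_prod_zpow {p : ℂ} {r : ℝ} (hr : 0 < r) (P : Finset ℂ) (n : ℂ → ℤ)
    (hP : ∀ q ∈ P, ‖q - p‖ ≠ r) :
    HasWinding (fun t => ∏ q ∈ P, (t - q) ^ n q) p r (∑ q ∈ P with ‖q - p‖ < r, n q) := by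
  classical
  rw [Finset.sum_filter]
  induction P using Finset.induction_on with
  | empty => simpa using hasWinding_const one_ne_zero p r
  | insert q P hq ih =>
    simp only [Finset.mem_insert, forall_eq_or_imp] at hP
    have h1 : HasWinding (fun t => (t - q) ^ n q) p r (if ‖q - p‖ < r then n q else 0) := by
      split_ifs with h
      · simpa using (hasWinding_sub_of_inside h).zpow (n q)
      · simpa using (hasWinding_sub_of_outside hr.le
          (lt_of_le_of_ne (not_lt.1 h) hP.1.symm)).zpow (n q)
    simpa [Finset.sum_insert hq, Finset.prod_insert hq] using h1.mul hr (ih hP.2)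

theorem HasWinding.of_prod_zpow_mul_exp {F g : ℂ → ℂ} {p : ℂ} {r : ℝ} (hr : 0 < r)
    (P : Finset ℂ) (n : ℂ → ℤ) (hP : ∀ q ∈ P, ‖q - p‖ ≠ r) (hg : ContinuousOn g (sphere p r))
    (hF : ∀ t ∈ sphere p r, F t = (∏ q ∈ P, (t - q) ^ n q) * Complex.exp (g t)) :
    HasWinding F p r (∑ q ∈ P with ‖q - p‖ < r, n q) := by
  simpa using ((hasWinding_prod_zpow hr P n hP).mul hr (hasWinding_exp hg)).congr hF

/-- A finite set has no point other than `p` in a small enough closed ball around `p`. -/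
theorem eventually_lt_norm_sub (P : Finset ℂ) (p : ℂ) :
    ∀ᶠ r in 𝓝[>] (0 : ℝ), ∀ q ∈ P, q ≠ p → r < ‖q - p‖ := by
  rw [Filter.eventually_all_finset]
  intro q _
  by_cases h : q = p
  · simp [h]
  · filter_upwards [nhdsWithin_le_nhds (Iio_mem_nhds (norm_pos_iff.2 (sub_ne_zero.2 h)))]
      with r hr _ using hr

theorem HasWinding.eventually_of_prod_zpow_mul_exp {F g : ℂ → ℂ} (P : Finset ℂ) (n : ℂ → ℤ)
    {U : Set ℂ} {p : ℂ} (hp : U ∈ 𝓝 p) (hpP : p ∈ P) (hg : ContinuousOn g (U \ P))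
    (hF : ∀ t ∈ U \ P, F t = (∏ q ∈ P, (t - q) ^ n q) * Complex.exp (g t)) :
    ∀ᶠ r in 𝓝[>] (0 : ℝ), HasWinding F p r (n p) := by
  obtain ⟨ε, hε, hball⟩ := Metric.mem_nhds_iff.1 hp
  filter_upwards [eventually_lt_norm_sub P p, self_mem_nhdsWithin,
    nhdsWithin_le_nhds (Iio_mem_nhds hε)] with r hr hr0 hrε
  have hr0 : 0 < r := hr0
  have hsub : sphere p r ⊆ U \ P := fun t ht => by
    have htr : ‖t - p‖ = r := by simpa [dist_eq_norm] using ht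
    refine ⟨hball (by rw [mem_ball, dist_eq_norm, htr]; exact hrε), fun htP => ?_⟩
    exact absurd (hr t htP (ne_of_mem_sphere ht hr0.ne')) (by rw [htr]; exact lt_irrefl _)
  have hfil : (P.filter fun q => ‖q - p‖ < r) = {p} := by
    ext q
    simp only [Finset.mem_filter, Finset.mem_singleton]
    constructor
    · rintro ⟨hq, hqr⟩
      by_contra hne
      exact absurd (hr q hq hne) hqr.not_gt
    · rintro rfl
      exact ⟨hpP, by simpa using hr0⟩
  have := HasWinding.of_prod_zpow_mul_exp hr0 P n (fun q hq => ?_) (hg.mono hsub)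
    fun t ht => hF t (hsub ht)
  · rwa [hfil, Finset.sum_singleton] at this
  · by_cases hqp : q = p
    · subst hqp; simpa using hr0.ne
    · exact (hr q hq hqp).ne'

/-- Substituting monomials with independent exponents into a nonzero Laurent polynomial gives, up
to a monomial factor, a polynomial not divisible by the second variable. -/
theorem exists_polynomial_of_laurent_comp (c : (ℤ × ℤ) →₀ ℂ) (hc : c ≠ 0) {m n r s : ℤ}
    (hD : m * s - n * r ≠ 0) :
    ∃ Q : ℂ[X][Y], Q.coeff 0 ≠ 0 ∧ ∀ U W : ℂ, U ≠ 0 → W ≠ 0 →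
      (∑ j ∈ c.support, c j * (U ^ m * W ^ n) ^ j.1 * (U ^ r * W ^ s) ^ j.2 = 0 ↔
        Q.evalEval U W = 0) := by
  classical
  let e₁ : ℤ × ℤ → ℤ := fun j => m * j.1 + r * j.2
  let e₂ : ℤ × ℤ → ℤ := fun j => n * j.1 + s * j.2
  have hinj : ∀ i j, e₁ i = e₁ j → e₂ i = e₂ j → i = j := by
    intro i j h1 h2
    simp only [e₁, e₂] at h1 h2
    refine Prod.ext ?_ ?_
    · refine mul_left_cancel₀ hD ?_
      linear_combination s * h1 - r * h2
    · refine mul_left_cancel₀ hD ?_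
      linear_combination -n * h1 + m * h2
  have hne : c.support.Nonempty := Finsupp.support_nonempty_iff.2 hc
  obtain ⟨j₁, hj₁, hmin₁⟩ := c.support.exists_min_image e₁ hne
  obtain ⟨j₂, hj₂, hmin₂⟩ := c.support.exists_min_image e₂ hne
  let Q : ℂ[X][Y] := ∑ j ∈ c.support, Polynomial.monomial (e₂ j - e₂ j₂).toNat
    (Polynomial.monomial (e₁ j - e₁ j₁).toNat (c j))
  refine ⟨Q, fun h => ?_, fun U W hU hW => ?_⟩
  · have h1 : (Q.coeff 0).coeff (e₁ j₂ - e₁ j₁).toNat = c j₂ := by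
      simp only [Q, Polynomial.finsetSum_coeff, Polynomial.coeff_monomial]
      rw [Finset.sum_eq_single j₂]
      · simp
      · intro j hj hne
        split_ifs with h2
        · rw [Polynomial.coeff_monomial, if_neg]
          intro h1
          have := hmin₁ j hj
          have := hmin₁ j₂ hj₂
          have := hmin₂ j hj
          exact hne (hinj _ _ (by lia) (by lia))
        · simp
      · exact fun h => absurd hj₂ h
    rw [h, Polynomial.coeff_zero] at h1
    exact Finsupp.mem_support_iff.1 hj₂ h1.symm
  · have key : Q.evalEval U W = U ^ (-e₁ j₁) * W ^ (-e₂ j₂) *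
        ∑ j ∈ c.support, c j * (U ^ m * W ^ n) ^ j.1 * (U ^ r * W ^ s) ^ j.2 := by
      simp only [Q, Polynomial.evalEval, Polynomial.eval_finsetSum, Polynomial.eval_monomial,
        Polynomial.eval_mul, Polynomial.eval_pow, Polynomial.eval_C, Finset.mul_sum]
      refine Finset.sum_congr rfl fun j hj => ?_
      have h1 : U ^ (e₁ j - e₁ j₁).toNat = U ^ (e₁ j - e₁ j₁) := by
        rw [← zpow_natCast, Int.toNat_of_nonneg (sub_nonneg.2 (hmin₁ j hj))]
      have h2 : W ^ (e₂ j - e₂ j₂).toNat = W ^ (e₂ j - e₂ j₂) := by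
        rw [← zpow_natCast, Int.toNat_of_nonneg (sub_nonneg.2 (hmin₂ j hj))]
      rw [h1, h2, mul_zpow, mul_zpow, ← zpow_mul, ← zpow_mul, ← zpow_mul, ← zpow_mul,
        sub_eq_add_neg, sub_eq_add_neg, zpow_add₀ hU, zpow_add₀ hW]
      simp only [e₁, e₂]
      rw [zpow_add₀ hU, zpow_add₀ hW]
      ring
    rw [key, mul_eq_zero, or_iff_right]
    exact mul_ne_zero (zpow_ne_zero _ hU) (zpow_ne_zero _ hW)

theorem exists_polynomial_map_eq_C_mul (p : (FractionRing ℂ[X])[X]) :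
    ∃ (b : ℂ[X]) (P : ℂ[X][Y]), b ≠ 0 ∧
      P.map (algebraMap ℂ[X] (FractionRing ℂ[X])) = C (algebraMap _ _ b) * p := by
  obtain ⟨b, hb, h⟩ := IsLocalization.integerNormalization_spec (nonZeroDivisors ℂ[X]) p
  refine ⟨b, IsLocalization.integerNormalization (nonZeroDivisors ℂ[X]) p,
    nonZeroDivisors.ne_zero hb, ?_⟩
  ext i
  simp [h, Algebra.smul_def]

/-- Away from finitely many values of the first variable, the zero set of a bivariate polynomial
is the zero set of one with simple roots in the second variable. -/
theorem exists_squarefree_evalEval {Q : ℂ[X][Y]} (hQ : Q ≠ 0) :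
    ∃ (R : ℂ[X][Y]) (d : ℂ[X]), d ≠ 0 ∧ ∀ U W : ℂ, d.eval U ≠ 0 →
      ((Q.evalEval U W = 0 ↔ R.evalEval U W = 0) ∧
        (R.evalEval U W = 0 → (derivative R).evalEval U W ≠ 0)) := by
  let K := FractionRing ℂ[X]
  let ι := algebraMap ℂ[X] K
  have hι : Function.Injective ι := IsFractionRing.injective _ _
  have hmap : Function.Injective (Polynomial.map ι) := Polynomial.map_injective ι hι
  have hq : Q.map ι ≠ 0 := (Polynomial.map_ne_zero_iff hι).2 hQ
  let ρ := UniqueFactorizationMonoid.radical (Q.map ι)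
  obtain ⟨e, he⟩ : ρ ∣ Q.map ι := UniqueFactorizationMonoid.radical_dvd_self
  obtain ⟨k, f, hf⟩ : ∃ k, Q.map ι ∣ ρ ^ k :=
    UniqueFactorizationMonoid.exists_dvd_radical_self_pow hq
  have hsep : ρ.Separable := PerfectField.separable_iff_squarefree.2
    UniqueFactorizationMonoid.squarefree_radical
  obtain ⟨a, b, hab⟩ := hsep
  obtain ⟨r, R, hr, hR⟩ := exists_polynomial_map_eq_C_mul ρ
  obtain ⟨e', E, he', hE⟩ := exists_polynomial_map_eq_C_mul e
  obtain ⟨f', F, hf', hF⟩ := exists_polynomial_map_eq_C_mul f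
  obtain ⟨a', A, ha', hA⟩ := exists_polynomial_map_eq_C_mul a
  obtain ⟨b', B, hb', hB⟩ := exists_polynomial_map_eq_C_mul b
  have h1 : C (r * e') * Q = R * E := hmap (by
    simp only [Polynomial.map_mul, Polynomial.map_C, map_mul] at *
    rw [hR, hE, he]; ring)
  have h2 : C f' * R ^ k = C (r ^ k) * Q * F := hmap (by
    simp only [Polynomial.map_mul, Polynomial.map_C, map_mul, Polynomial.map_pow, map_pow] at *
    rw [hR, hF, mul_pow, hf]; ring)
  have h3 : C b' * A * R + C a' * B * derivative R = C (a' * b' * r) := hmap (by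
    simp only [Polynomial.map_mul, Polynomial.map_C, map_mul, Polynomial.map_add] at *
    rw [← Polynomial.derivative_map, hR, hA, hB]
    simp only [Polynomial.derivative_mul, Polynomial.derivative_C]
    linear_combination C (ι a') * C (ι b') * C (ι r) * hab)
  refine ⟨R, r * e' * f' * a' * b', by simp [hr, he', hf', ha', hb'], fun U W hd => ?_⟩
  simp only [Polynomial.eval_mul, mul_ne_zero_iff] at hd
  obtain ⟨⟨⟨⟨dr, de⟩, df⟩, da⟩, db⟩ := hd
  have g1 := congrArg (Polynomial.evalEval U W) h1
  have g2 := congrArg (Polynomial.evalEval U W) h2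
  have g3 := congrArg (Polynomial.evalEval U W) h3
  simp only [Polynomial.evalEval_mul, Polynomial.evalEval_C, Polynomial.eval_mul,
    Polynomial.evalEval_add, Polynomial.evalEval_pow, Polynomial.eval_pow] at g1 g2 g3
  refine ⟨⟨fun h => ?_, fun h => ?_⟩, fun h h' => ?_⟩
  · rw [h] at g2
    have : Polynomial.evalEval U W R ^ k = 0 := by
      simpa [df] using g2
    exact eq_zero_of_pow_eq_zero this
  · rw [h] at g1
    simpa [dr, de] using g1
  · rw [h, h'] at g3
    simp [da, db, dr] at g3

theorem norm_eval_leadingCoeff_mul_le {Q : ℂ[X][Y]} {U W : ℂ} (h : Q.evalEval U W = 0) :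
    ‖Q.leadingCoeff.eval U * W‖ ≤ ∑ i ∈ Finset.range (Q.natDegree + 1), ‖(Q.coeff i).eval U‖ := by
  have hsum : Q.evalEval U W =
      ∑ i ∈ Finset.range (Q.natDegree + 1), (Q.coeff i).eval U * W ^ i := by
    simp [Polynomial.evalEval, Polynomial.eval_eq_sum_range (p := Q), Polynomial.eval_finsetSum]
  have hl : ‖Q.leadingCoeff.eval U‖ ≤
      ∑ i ∈ Finset.range (Q.natDegree + 1), ‖(Q.coeff i).eval U‖ :=
    Finset.single_le_sum (f := fun i => ‖(Q.coeff i).eval U‖) (fun i _ => norm_nonneg _)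
      (Finset.self_mem_range_succ _)
  rcases le_total ‖W‖ 1 with hW | hW
  · rw [norm_mul]
    exact (mul_le_of_le_one_right (norm_nonneg _) hW).trans hl
  rw [hsum, Finset.sum_range_succ] at h
  rw [Finset.sum_range_succ]
  refine le_add_of_le_of_nonneg ?_ (norm_nonneg _)
  rcases Nat.eq_zero_or_pos Q.natDegree with h0 | h0
  · have : Q.leadingCoeff.eval U = 0 := by
      simpa [h0, Polynomial.leadingCoeff] using h
    rw [this, zero_mul, norm_zero]
    exact Finset.sum_nonneg fun i _ => norm_nonneg _
  obtain ⟨N, hN⟩ := Nat.exists_eq_add_of_lt h0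
  rw [zero_add] at hN
  rw [Polynomial.leadingCoeff]
  rw [hN] at h ⊢
  have hWpos : 0 < ‖W‖ ^ N := pow_pos (zero_lt_one.trans_le hW) N
  refine le_of_mul_le_mul_right ?_ hWpos
  calc ‖(Q.coeff (N + 1)).eval U * W‖ * ‖W‖ ^ N
      = ‖(Q.coeff (N + 1)).eval U * W ^ (N + 1)‖ := by
        rw [norm_mul, norm_mul, norm_pow]; ring
    _ = ‖∑ i ∈ Finset.range (N + 1), (Q.coeff i).eval U * W ^ i‖ := by
        rw [eq_neg_of_add_eq_zero_right h, norm_neg]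
    _ ≤ ∑ i ∈ Finset.range (N + 1), ‖(Q.coeff i).eval U * W ^ i‖ := norm_sum_le _ _
    _ ≤ ∑ i ∈ Finset.range (N + 1), ‖(Q.coeff i).eval U‖ * ‖W‖ ^ N := by
        refine Finset.sum_le_sum fun i hi => ?_
        rw [norm_mul, norm_pow]
        exact mul_le_mul_of_nonneg_left
          (pow_le_pow_right₀ hW (Nat.lt_succ_iff.1 (Finset.mem_range.1 hi))) (norm_nonneg _)
    _ = _ := by rw [Finset.sum_mul]

theorem continuous_evalEval (Q : ℂ[X][Y]) : Continuous fun z : ℂ × ℂ => Q.evalEval z.1 z.2 := by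
  have : (fun z : ℂ × ℂ => Q.evalEval z.1 z.2) = fun z : ℂ × ℂ =>
      ∑ i ∈ Finset.range (Q.natDegree + 1), (Q.coeff i).eval z.1 * z.2 ^ i := by
    funext z
    simp [Polynomial.evalEval, Polynomial.eval_eq_sum_range (p := Q), Polynomial.eval_finsetSum]
  rw [this]
  fun_prop

/-- The nonzero roots `W` of `Q(U, W)` stay in a compact annulus for `U` near a generic value. -/
theorem exists_annulus_bound {Q : ℂ[X][Y]} {w : ℂ} (h0 : (Q.coeff 0).eval w ≠ 0)
    (hl : Q.leadingCoeff.eval w ≠ 0) :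
    ∃ a b : ℝ, 0 < a ∧ ∀ᶠ U in 𝓝 w, ∀ W, Q.evalEval U W = 0 → a ≤ ‖W‖ ∧ ‖W‖ ≤ b := by
  have hc : ContinuousAt (fun z : ℂ × ℂ => Q.evalEval z.1 z.2) (w, 0) :=
    (continuous_evalEval Q).continuousAt
  have hne : Q.evalEval w 0 ≠ 0 := by
    simpa [Polynomial.evalEval, ← Polynomial.coeff_zero_eq_eval_zero] using h0
  have hev := hc.eventually_ne hne
  rw [nhds_prod_eq] at hev
  obtain ⟨pa, hpa, pb, hpb, hab⟩ := Filter.eventually_prod_iff.1 hev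
  obtain ⟨a, ha, hball⟩ := Metric.eventually_nhds_iff.1 hpb
  let T : ℂ → ℝ := fun U => (∑ i ∈ Finset.range (Q.natDegree + 1), ‖(Q.coeff i).eval U‖) /
    ‖Q.leadingCoeff.eval U‖
  have hT : ContinuousAt T w :=
    ContinuousAt.div (by fun_prop) (by fun_prop) (norm_ne_zero_iff.2 hl)
  have hle : ContinuousAt (fun U => Q.leadingCoeff.eval U) w := by fun_prop
  refine ⟨a, T w + 1, ha, ?_⟩
  filter_upwards [hpa, hT.eventually_lt_const (lt_add_one _), hle.eventually_ne hl] with U h1 h2 h3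
  intro W hW
  refine ⟨?_, ?_⟩
  · by_contra hlt
    exact hab h1 (hball (by simpa [dist_eq_norm] using hlt)) hW
  · refine le_trans ?_ h2.le
    have := norm_eval_leadingCoeff_mul_le hW
    rw [le_div_iff₀ (norm_pos_iff.2 h3), mul_comm, ← norm_mul]
    exact this

/-- Implicit function theorem at a simple root. -/
theorem exists_root_branch {R : ℂ[X][Y]} {w z : ℂ} (h : R.evalEval w z = 0)
    (h' : (derivative R).evalEval w z ≠ 0) :
    ∃ ω : ℂ → ℂ, DifferentiableAt ℂ ω w ∧ ω w = z ∧ (∃ N ∈ 𝓝 w, ContinuousOn ω N) ∧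
      (∀ᶠ U in 𝓝 w, R.evalEval U (ω U) = 0) ∧
      ∀ᶠ q in 𝓝 (w, z), R.evalEval q.1 q.2 = 0 → ω q.1 = q.2 := by
  let f : ℂ × ℂ → ℂ := fun q => R.evalEval q.1 q.2
  have hf : ContDiff ℂ 1 f := by
    have : f = fun q : ℂ × ℂ =>
        ∑ i ∈ Finset.range (R.natDegree + 1), (R.coeff i).eval q.1 * q.2 ^ i := by
      funext q
      simp [f, Polynomial.evalEval, Polynomial.eval_eq_sum_range (p := R),
        Polynomial.eval_finsetSum]
    rw [this]
    refine ContDiff.sum fun i _ => ContDiff.mul ?_ (by fun_prop)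
    have h1 := (R.coeff i).contDiff_aeval (𝕜 := ℂ) 1
    simp only [Polynomial.coe_aeval_eq_eval] at h1
    exact h1.comp contDiff_fst
  have hstrict : HasStrictFDerivAt f (fderiv ℂ f (w, z)) (w, z) :=
    hf.contDiffAt.hasStrictFDerivAt one_ne_zero
  have hpartial : (fderiv ℂ f (w, z)) (0, 1) = (derivative R).evalEval w z := by
    have h1 : HasDerivAt (fun y => f (w, y)) ((fderiv ℂ f (w, z)) (0, 1)) z := by
      have h2 : HasDerivAt (fun y : ℂ => (w, y)) ((0 : ℂ), (1 : ℂ)) z :=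
        (hasDerivAt_const z w).prodMk (hasDerivAt_id z)
      exact hstrict.hasFDerivAt.comp_hasDerivAt z h2
    have h3 : (fun y => f (w, y)) = fun y => (R.map (Polynomial.evalRingHom w)).eval y := by
      funext y
      simp [f, Polynomial.map_evalRingHom_eval]
    have h4 : HasDerivAt (fun y => f (w, y)) ((derivative R).evalEval w z) z := by
      rw [h3]
      have := (R.map (Polynomial.evalRingHom w)).hasDerivAt z
      rwa [Polynomial.derivative_map, Polynomial.map_evalRingHom_eval] at this
    exact h1.unique h4
  have hinv : (fderiv ℂ f (w, z) ∘L .inr ℂ ℂ ℂ).IsInvertible := by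
    refine ⟨ContinuousLinearEquiv.unitsEquivAut ℂ (Units.mk0 _ h'), ?_⟩
    ext
    simp [hpartial]
  have hd := hstrict.hasStrictFDerivAt_implicitFunctionOfProdDomain hinv
  refine ⟨hstrict.implicitFunctionOfProdDomain hinv, hd.hasFDerivAt.differentiableAt,
    (hstrict.eventually_apply_eq_iff_implicitFunctionOfProdDomain hinv).self_of_nhds.1 rfl, ?_,
    ?_, ?_⟩
  · obtain ⟨K, N, hN, hL⟩ := hd.exists_lipschitzOnWith
    exact ⟨N, hN, hL.continuousOn⟩
  · filter_upwards [hstrict.eventually_apply_implicitFunctionOfProdDomain hinv] with U hU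
    exact hU.trans h
  · filter_upwards [hstrict.eventually_apply_eq_iff_implicitFunctionOfProdDomain hinv] with q hq
    exact fun h0 => hq.1 (h0.trans h.symm)

/-- The plane punctured at `0` and `1`. -/
def twicePuncturedPlane : Set ℂ := univ \ (({0, 1} : Finset ℂ) : Set ℂ)

theorem mem_twicePuncturedPlane {t : ℂ} : t ∈ twicePuncturedPlane ↔ t ≠ 0 ∧ t ≠ 1 := by
  simp [twicePuncturedPlane]

theorem isOpen_twicePuncturedPlane : IsOpen twicePuncturedPlane :=
  isOpen_univ.sdiff (Finset.finite_toSet _).isClosed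

theorem isPreconnected_compl_of_finite {T : Set ℂ} (hT : T.Finite) : IsPreconnected Tᶜ :=
  (hT.countable.isConnected_compl_of_one_lt_rank
    (by simp [Complex.rank_real_complex])).isPreconnected

theorem isPreconnected_twicePuncturedPlane_diff {T : Set ℂ} (hT : T.Finite) :
    IsPreconnected (twicePuncturedPlane \ T) := by
  have : twicePuncturedPlane \ T = ((({0, 1} : Finset ℂ) : Set ℂ) ∪ T)ᶜ := by
    ext t; simp [twicePuncturedPlane, not_or]
  rw [this]
  exact isPreconnected_compl_of_finite ((Finset.finite_toSet _).union hT)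

theorem isPreconnected_twicePuncturedPlane : IsPreconnected twicePuncturedPlane := by
  simpa using isPreconnected_twicePuncturedPlane_diff finite_empty

theorem eqOn_of_eqOn_diff_finite {U T : Set ℂ} {E : Type*} [TopologicalSpace E] [T2Space E]
    (hU : IsOpen U) (hT : T.Finite) {f g : ℂ → E}
    (hf : ContinuousOn f U) (hg : ContinuousOn g U) (h : EqOn f g (U \ T)) : EqOn f g U := by
  intro t ht
  have h1 : ∀ᶠ s in 𝓝[≠] t, f s = g s := by
    have h2 : ∀ᶠ s in 𝓝 t, s ∉ T \ {t} :=
      (hT.subset sdiff_subset).isClosed.isOpen_compl.mem_nhds (by simp)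
    filter_upwards [nhdsWithin_le_nhds (hU.mem_nhds ht), nhdsWithin_le_nhds h2,
      self_mem_nhdsWithin] with s hs hs2 hs3
    exact h ⟨hs, fun hsT => hs2 ⟨hsT, hs3⟩⟩
  have hf' : Tendsto f (𝓝[≠] t) (𝓝 (f t)) :=
    (hf.continuousAt (hU.mem_nhds ht)).tendsto.mono_left nhdsWithin_le_nhds
  have hg' : Tendsto g (𝓝[≠] t) (𝓝 (g t)) :=
    (hg.continuousAt (hU.mem_nhds ht)).tendsto.mono_left nhdsWithin_le_nhds
  exact tendsto_nhds_unique hf' (hg'.congr' (h1.mono fun s hs => hs.symm))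

/-- The zeros of a bivariate polynomial outside the coordinate axes. -/
def torusZeros (Q : ℂ[X][Y]) : Set (ℂ × ℂ) :=
  {q | q.1 ≠ 0 ∧ q.2 ≠ 0 ∧ Q.evalEval q.1 q.2 = 0}

/-- `(u, v)` parametrises, injectively and up to `N`-th roots of unity, the zeros of `Q` outside
the coordinate axes, by the twice punctured plane; `θ` is a continuous inverse. -/
structure IsCurveParam (u v : ℂ → ℂ) (θ : ℂ × ℂ → ℂ) (Q : ℂ[X][Y]) (N : ℕ) : Prop where
  continuousOn_fst : ContinuousOn u twicePuncturedPlane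
  continuousOn_snd : ContinuousOn v twicePuncturedPlane
  mem_torusZeros : ∀ t ∈ twicePuncturedPlane, (u t, v t) ∈ torusZeros Q
  continuousOn_inv : ContinuousOn θ (torusZeros Q)
  mapsTo_inv : MapsTo θ (torusZeros Q) twicePuncturedPlane
  inv_apply : ∀ t ∈ twicePuncturedPlane, θ (u t, v t) = t
  fst_inv_pow : ∀ q ∈ torusZeros Q, u (θ q) ^ N = q.1 ^ N
  snd_inv_pow : ∀ q ∈ torusZeros Q, v (θ q) ^ N = q.2 ^ N
  ne_zero : N ≠ 0
  coeff_zero_ne_zero : Q.coeff 0 ≠ 0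

/-- Over a neighbourhood of `w`, the roots of `Q` are bounded away from `0` and `∞` and form
disjoint holomorphic branches. -/
structure IsGenericValue (Q : ℂ[X][Y]) (w : ℂ) : Prop where
  ne_zero : w ≠ 0
  coeff_zero : (Q.coeff 0).eval w ≠ 0
  leadingCoeff : Q.leadingCoeff.eval w ≠ 0
  exists_branch : ∀ z, Q.evalEval w z = 0 → ∃ ω : ℂ → ℂ, DifferentiableAt ℂ ω w ∧ ω w = z ∧
    (∃ N ∈ 𝓝 w, ContinuousOn ω N) ∧ (∀ᶠ U in 𝓝 w, Q.evalEval U (ω U) = 0) ∧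
      ∀ᶠ q in 𝓝 (w, z), Q.evalEval q.1 q.2 = 0 → ω q.1 = q.2

theorem exists_finset_isGenericValue {Q : ℂ[X][Y]} (hQ : Q.coeff 0 ≠ 0) :
    ∃ B : Finset ℂ, 0 ∈ B ∧ ∀ w ∉ B, IsGenericValue Q w := by
  classical
  have hQ0 : Q ≠ 0 := fun h => hQ (by simp [h])
  obtain ⟨R, d, hd, hR⟩ := exists_squarefree_evalEval hQ0
  let P : ℂ[X] := X * d * Q.coeff 0 * Q.leadingCoeff
  have hP : P ≠ 0 := by simp [P, hd, hQ, hQ0, Polynomial.X_ne_zero]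
  have hmem : ∀ w ∉ P.roots.toFinset, w ≠ 0 ∧ d.eval w ≠ 0 ∧ (Q.coeff 0).eval w ≠ 0 ∧
      Q.leadingCoeff.eval w ≠ 0 := by
    intro w hw
    simpa [hP, P, not_or, and_assoc] using hw
  refine ⟨P.roots.toFinset, ?_, fun w hw => ?_⟩
  · rw [Multiset.mem_toFinset, Polynomial.mem_roots hP]
    simp [P, Polynomial.IsRoot]
  obtain ⟨h0, hdw, hc, hl⟩ := hmem w hw
  refine ⟨h0, hc, hl, fun z hz => ?_⟩
  have hzR := (hR w z hdw).1.1 hz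
  obtain ⟨ω, h1, h2, h3, h4, h5⟩ := exists_root_branch hzR ((hR w z hdw).2 hzR)
  have hde : ∀ᶠ U in 𝓝 w, d.eval U ≠ 0 :=
    (show ContinuousAt (fun U => d.eval U) w by fun_prop).eventually_ne hdw
  refine ⟨ω, h1, h2, h3, ?_, ?_⟩
  · filter_upwards [h4, hde] with U hU hdU using (hR U _ hdU).1.2 hU
  · have hde' : ∀ᶠ q in 𝓝 (w, z), d.eval q.1 ≠ 0 :=
      (continuousAt_fst (p := (w, z))).tendsto.eventually hde
    filter_upwards [h5, hde'] with q hq hdq h using hq ((hR _ _ hdq).1.1 h)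

theorem eventually_eq_one_of_pow_eq_one {N : ℕ} (hN : N ≠ 0) :
    ∀ᶠ z in 𝓝 (1 : ℂ), z ^ N = 1 → z = 1 := by
  have hfin : ({z : ℂ | z ^ N = 1} \ {1}).Finite := by
    refine Set.Finite.subset (Polynomial.nthRoots N (1 : ℂ)).toFinset.finite_toSet fun z hz => ?_
    simpa [Polynomial.mem_nthRoots (Nat.pos_of_ne_zero hN)] using hz.1
  filter_upwards [hfin.isClosed.isOpen_compl.mem_nhds (by simp : (1 : ℂ) ∈ _)] with z hz h
  by_contra h1
  exact hz ⟨h, h1⟩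

namespace IsCurveParam

variable {u v : ℂ → ℂ} {θ : ℂ × ℂ → ℂ} {Q : ℂ[X][Y]} {N : ℕ}

theorem fst_ne_zero (h : IsCurveParam u v θ Q N) {t : ℂ} (ht : t ∈ twicePuncturedPlane) :
    u t ≠ 0 := (h.mem_torusZeros t ht).1

theorem snd_ne_zero (h : IsCurveParam u v θ Q N) {t : ℂ} (ht : t ∈ twicePuncturedPlane) :
    v t ≠ 0 := (h.mem_torusZeros t ht).2.1

theorem evalEval_eq_zero (h : IsCurveParam u v θ Q N) {t : ℂ} (ht : t ∈ twicePuncturedPlane) :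
    Q.evalEval (u t) (v t) = 0 := (h.mem_torusZeros t ht).2.2

theorem continuousAt_fst (h : IsCurveParam u v θ Q N) {t : ℂ} (ht : t ∈ twicePuncturedPlane) :
    ContinuousAt u t := h.continuousOn_fst.continuousAt (isOpen_twicePuncturedPlane.mem_nhds ht)

theorem continuousAt_snd (h : IsCurveParam u v θ Q N) {t : ℂ} (ht : t ∈ twicePuncturedPlane) :
    ContinuousAt v t := h.continuousOn_snd.continuousAt (isOpen_twicePuncturedPlane.mem_nhds ht)

/-- Fibres of a nonconstant first coordinate are finite. -/
theorem finite_fiber (h : IsCurveParam u v θ Q N)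
    (hnc : ∀ c, ∃ t ∈ twicePuncturedPlane, u t ≠ c) (c : ℂ) :
    {t ∈ twicePuncturedPlane | u t = c}.Finite := by
  have hQ0 : Q ≠ 0 := fun h0 => h.coeff_zero_ne_zero (by simp [h0])
  have hunit : ¬ IsUnit (C (X - C c) : ℂ[X][Y]) := by
    rw [Polynomial.isUnit_C]
    exact Polynomial.not_isUnit_X_sub_C c
  obtain ⟨Q', hQ', hdvd⟩ :=
    (FiniteMultiplicity.of_not_isUnit hunit hQ0).exists_eq_pow_mul_and_not_dvd
  have hmap : Q'.map (Polynomial.evalRingHom c) ≠ 0 := by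
    intro h0
    refine hdvd (Polynomial.C_dvd_iff_dvd_coeff _ _ |>.2 fun i => ?_)
    rw [Polynomial.dvd_iff_isRoot]
    simpa using congrArg (fun p => Polynomial.coeff p i) h0
  let F : Set ℂ := {t ∈ twicePuncturedPlane | u t = c ∧ Q'.evalEval (u t) (v t) = 0}
  have hF : F.Finite := by
    refine ((Q'.map (Polynomial.evalRingHom c)).roots.toFinset.finite_toSet.image
      fun z => θ (c, z)).subset ?_
    rintro t ⟨ht, htc, htQ⟩
    refine ⟨v t, ?_, by rw [← htc]; exact h.inv_apply t ht⟩
    simp only [Finset.mem_coe, Multiset.mem_toFinset]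
    rw [Polynomial.mem_roots hmap, Polynomial.IsRoot, Polynomial.map_evalRingHom_eval, ← htc, htQ]
  have hcont : ContinuousOn (fun t => Q'.evalEval (u t) (v t)) twicePuncturedPlane :=
    (continuous_evalEval Q').comp_continuousOn (h.continuousOn_fst.prodMk h.continuousOn_snd)
  have ho₁ := hcont.isOpen_inter_preimage isOpen_twicePuncturedPlane
    (isOpen_ne (x := (0 : ℂ)))
  have ho₂ := h.continuousOn_fst.isOpen_inter_preimage isOpen_twicePuncturedPlane
    (isOpen_ne (x := c))
  have hcover : ∀ t ∈ twicePuncturedPlane, u t ≠ c → Q'.evalEval (u t) (v t) = 0 := by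
    intro t ht htc
    have h1 := h.evalEval_eq_zero ht
    rw [hQ', Polynomial.evalEval_mul, Polynomial.evalEval_pow, Polynomial.evalEval_C] at h1
    refine (mul_eq_zero.1 h1).resolve_left (pow_ne_zero _ ?_)
    simpa [sub_eq_zero] using htc
  rcases (isPreconnected_twicePuncturedPlane_diff hF).subset_or_subset ho₁ ho₂
    (Set.disjoint_left.2 fun t h1 h2 => h1.2 (hcover t h2.1 h2.2)) (fun t ht => by
      by_cases htc : u t = c
      · exact Or.inl ⟨ht.1, fun h0 => ht.2 ⟨ht.1, htc, h0⟩⟩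
      · exact Or.inr ⟨ht.1, htc⟩) with h1 | h1
  · have heq : EqOn u (fun _ => c) twicePuncturedPlane :=
      eqOn_of_eqOn_diff_finite isOpen_twicePuncturedPlane hF h.continuousOn_fst
        continuousOn_const fun t ht => by
          by_contra htc
          exact (h1 ht).2 (hcover t ht.1 htc)
    obtain ⟨t, ht, htc⟩ := hnc c
    exact absurd (heq ht) htc
  · refine hF.subset fun t ht => ?_
    by_contra htF
    exact (h1 ⟨ht.1, htF⟩).2 ht.2

/-- The first coordinate is a local homeomorphism over generic values. -/
theorem exists_local_section (h : IsCurveParam u v θ Q N) {s : ℂ} (hs : s ∈ twicePuncturedPlane)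
    (hw : IsGenericValue Q (u s)) :
    ∃ σ : ℂ → ℂ, σ (u s) = s ∧ (∃ O ∈ 𝓝 (u s), ContinuousOn σ O ∧ ∀ U ∈ O,
      σ U ∈ twicePuncturedPlane ∧ u (σ U) = U) ∧ ∀ᶠ t in 𝓝 s, σ (u t) = t := by
  obtain ⟨ω, -, hωs, ⟨N₀, hN₀, hωc⟩, hω0, hωuniq⟩ :=
    hw.exists_branch (v s) (h.evalEval_eq_zero hs)
  have hωat : ContinuousAt ω (u s) := hωc.continuousAt hN₀
  let O₁ : Set ℂ := {U | U ∈ N₀ ∧ Q.evalEval U (ω U) = 0 ∧ ω U ≠ 0 ∧ U ≠ 0}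
  have hO₁ : O₁ ∈ 𝓝 (u s) := by
    filter_upwards [hN₀, hω0, hωat.eventually_ne (hωs ▸ h.snd_ne_zero hs),
      continuousAt_id.eventually_ne hw.ne_zero] with U h1 h2 h3 h4 using ⟨h1, h2, h3, h4⟩
  have hZ : ∀ U ∈ O₁, (U, ω U) ∈ torusZeros Q := fun U hU => ⟨hU.2.2.2, hU.2.2.1, hU.2.1⟩
  let σ : ℂ → ℂ := fun U => θ (U, ω U)
  have hσs : σ (u s) = s := by simp only [σ, hωs]; exact h.inv_apply s hs
  have hσc : ContinuousOn σ O₁ :=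
    h.continuousOn_inv.comp (continuousOn_id.prodMk (hωc.mono fun U hU => hU.1)) hZ
  have hσS : ∀ U ∈ O₁, σ U ∈ twicePuncturedPlane := fun U hU => h.mapsTo_inv (hZ U hU)
  have hquot : ContinuousAt (fun U => u (σ U) / U) (u s) := by
    refine ContinuousAt.div ?_ continuousAt_id hw.ne_zero
    refine ContinuousAt.comp' (f := σ) (g := u) ?_ (hσc.continuousAt hO₁)
    rw [hσs]
    exact h.continuousAt_fst hs
  have hone : ∀ᶠ U in 𝓝 (u s), (u (σ U) / U) ^ N = 1 → u (σ U) / U = 1 := by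
    have ht : Tendsto (fun U => u (σ U) / U) (𝓝 (u s)) (𝓝 1) := by
      have := hquot.tendsto
      rwa [hσs, div_self hw.ne_zero] at this
    exact ht.eventually (eventually_eq_one_of_pow_eq_one h.ne_zero)
  refine ⟨σ, hσs, ⟨O₁ ∩ {U | (u (σ U) / U) ^ N = 1 → u (σ U) / U = 1},
    inter_mem hO₁ hone, hσc.mono inter_subset_left, fun U hU => ⟨hσS U hU.1, ?_⟩⟩, ?_⟩
  · have hU0 : U ≠ 0 := hU.1.2.2.2
    refine (div_eq_one_iff_eq hU0).1 (hU.2 ?_)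
    rw [div_pow, h.fst_inv_pow _ (hZ U hU.1), div_self (pow_ne_zero _ hU0)]
  · have hc : ContinuousAt (fun t => (u t, v t)) s :=
      (h.continuousAt_fst hs).prodMk (h.continuousAt_snd hs)
    filter_upwards [hc.eventually hωuniq, isOpen_twicePuncturedPlane.mem_nhds hs] with t ht htS
    simp only [σ]
    rw [ht (h.evalEval_eq_zero htS)]
    exact h.inv_apply t htS

/-- The first coordinate is proper over generic values. -/
theorem exists_compact_preimage (h : IsCurveParam u v θ Q N) {w : ℂ} (hw : IsGenericValue Q w) :
    ∃ O ∈ 𝓝 w, ∃ K : Set ℂ, IsCompact K ∧ K ⊆ twicePuncturedPlane ∧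
      ∀ t ∈ twicePuncturedPlane, u t ∈ O → t ∈ K := by
  obtain ⟨a, b, ha, hab⟩ := exists_annulus_bound hw.coeff_zero hw.leadingCoeff
  have hev : ∀ᶠ U in 𝓝 w, U ≠ 0 ∧ ∀ W, Q.evalEval U W = 0 → a ≤ ‖W‖ ∧ ‖W‖ ≤ b :=
    (continuousAt_id.eventually_ne hw.ne_zero).and hab
  obtain ⟨ε, hε, hball⟩ := nhds_basis_closedBall.mem_iff.1 hev
  let Z : Set (ℂ × ℂ) := (closedBall w ε ×ˢ closedBall 0 b) ∩
    {q | a ≤ ‖q.2‖ ∧ Q.evalEval q.1 q.2 = 0}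
  have hZc : IsCompact Z := by
    refine ((isCompact_closedBall w ε).prod (isCompact_closedBall 0 b)).inter_right ?_
    exact (isClosed_le continuous_const continuous_snd.norm).inter
      (isClosed_eq (continuous_evalEval Q) continuous_const)
  have hZ : Z ⊆ torusZeros Q := by
    rintro q ⟨⟨hq1, -⟩, hqa, hq⟩
    exact ⟨(hball hq1).1, norm_pos_iff.1 (ha.trans_le hqa), hq⟩
  refine ⟨closedBall w ε, closedBall_mem_nhds w hε, θ '' Z,
    hZc.image_of_continuousOn (h.continuousOn_inv.mono hZ),
    (h.mapsTo_inv.mono_left hZ).image_subset, fun t ht hut => ?_⟩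
  have hb := (hball hut).2 (v t) (h.evalEval_eq_zero ht)
  exact ⟨(u t, v t), ⟨⟨hut, by simpa using hb.2⟩, hb.1, h.evalEval_eq_zero ht⟩,
    h.inv_apply t ht⟩

end IsCurveParam

/-- A function along a filter with a basis of preconnected sets, which eventually leaves some
neighbourhood of each point outside a finite set `B`, tends to a point of `B` or to infinity. -/
theorem tendsto_of_eventually_notMem {L : Filter ℂ} {U : Set ℂ} {f : ℂ → ℂ}
    (hL : ∀ A ∈ L, ∃ A' ∈ L, A' ⊆ A ∧ IsPreconnected A') (hU : U ∈ L) (hf : ContinuousOn f U)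
    (B : Finset ℂ) (hB : ∀ w ∉ B, ∃ O ∈ 𝓝 w, ∀ᶠ t in L, f t ∉ O) :
    (∃ b ∈ B, Tendsto f L (𝓝 b)) ∨ Tendsto f L (cocompact ℂ) := by
  have hcomp : ∀ K : Set ℂ, IsCompact K → Disjoint K B → ∀ᶠ t in L, f t ∉ K := by
    intro K hK hKB
    refine hK.induction_on (p := fun K => ∀ᶠ t in L, f t ∉ K) (by simp) ?_ ?_ ?_
    · exact fun s t hst ht => ht.mono fun x hx hxs => hx (hst hxs)
    · intro s t hs ht
      filter_upwards [hs, ht] with x h1 h2 h3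
      exact h3.elim h1 h2
    · intro x hx
      obtain ⟨O, hO, h⟩ := hB x fun hxB => Set.disjoint_left.1 hKB hx hxB
      exact ⟨O, mem_nhdsWithin_of_mem_nhds hO, h⟩
  by_cases hinf : Tendsto f L (cocompact ℂ)
  · exact Or.inr hinf
  left
  obtain ⟨b, hb, hfreq⟩ : ∃ b ∈ B, ∀ ε > 0, ∃ᶠ t in L, f t ∈ ball b ε := by
    rw [(hasBasis_cocompact.tendsto_right_iff)] at hinf
    push Not at hinf
    obtain ⟨K, hK, hfK⟩ := hinf
    obtain ⟨b, -, hb⟩ := hK.exists_mapClusterPt_of_frequently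
      (hfK.mono fun t ht => by simpa using ht)
    have hfreq : ∀ O ∈ 𝓝 b, ∃ᶠ t in L, f t ∈ O := fun O hO => hb.frequently hO
    refine ⟨b, ?_, fun ε hε => hfreq _ (ball_mem_nhds b hε)⟩
    by_contra hbB
    obtain ⟨O, hO, h⟩ := hB b hbB
    exact (hfreq O hO) (h.mono fun t ht => ht)
  refine ⟨b, hb, ?_⟩
  have hsmall : ∀ᶠ ε in 𝓝[>] (0 : ℝ), ∀ᶠ t in L, f t ∈ ball b ε := by
    filter_upwards [eventually_lt_norm_sub B b, self_mem_nhdsWithin] with ε hε hε0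
    have hε0 : 0 < ε := hε0
    have hsph : ∀ᶠ t in L, f t ∉ sphere b ε := by
      refine hcomp _ (isCompact_sphere b ε) (Set.disjoint_left.2 fun x hx hxB => ?_)
      have h1 := hε x hxB (ne_of_mem_sphere hx hε0.ne')
      rw [mem_sphere_iff_norm.1 hx] at h1
      exact lt_irrefl _ h1
    obtain ⟨A, hA, hAsub, hAc⟩ := hL _ (inter_mem hU hsph)
    have himg : IsPreconnected (f '' A) := hAc.image f (hf.mono fun t ht => (hAsub ht).1)
    obtain ⟨t₀, ht₀, ht₀A⟩ := ((hfreq ε hε0).and_eventually hA).exists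
    have hsub : f '' A ⊆ ball b ε := by
      refine himg.subset_left_of_subset_union isOpen_ball
        (isClosed_closedBall (x := b) (ε := ε)).isOpen_compl
        (Set.disjoint_left.2 fun x h1 h2 => h2 (ball_subset_closedBall h1)) ?_
        ⟨f t₀, ⟨t₀, ht₀A, rfl⟩, ht₀⟩
      rintro _ ⟨t, ht, rfl⟩
      have h2 : f t ∉ sphere b ε := (hAsub ht).2
      by_cases h3 : f t ∈ closedBall b ε
      · exact Or.inl (lt_of_le_of_ne h3 h2)
      · exact Or.inr h3
    filter_upwards [hA] with t ht using hsub ⟨t, ht, rfl⟩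
  rw [nhds_basis_ball.tendsto_right_iff]
  intro ε hε
  obtain ⟨δ, hδ, hδε⟩ := (hsmall.and (nhdsWithin_le_nhds (Iio_mem_nhds hε))).exists
  filter_upwards [hδ] with t ht using ball_subset_ball (le_of_lt hδε) ht

theorem exists_isPreconnected_subset_of_mem_nhdsNE (p : ℂ) (A : Set ℂ) (hA : A ∈ 𝓝[≠] p) :
    ∃ A' ∈ 𝓝[≠] p, A' ⊆ A ∧ IsPreconnected A' := by
  obtain ⟨r, hr, hball⟩ := Metric.mem_nhdsWithin_iff.1 hA
  refine ⟨ball p r ∩ {p}ᶜ, Metric.mem_nhdsWithin_iff.2 ⟨r, hr, Subset.rfl⟩, hball, ?_⟩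
  have himg : (fun ζ => p + Complex.exp ζ) '' {ζ : ℂ | ζ.re < Real.log r} = ball p r ∩ {p}ᶜ := by
    ext t
    constructor
    · rintro ⟨ζ, hζ, rfl⟩
      refine ⟨?_, by simp⟩
      rw [mem_ball, dist_eq_norm, add_sub_cancel_left, Complex.norm_exp]
      exact (Real.lt_log_iff_exp_lt hr).1 hζ
    · rintro ⟨ht, htp⟩
      have ht0 : t - p ≠ 0 := sub_ne_zero.2 htp
      refine ⟨Complex.log (t - p), ?_, by simp [Complex.exp_log ht0]⟩
      rw [mem_ball, dist_eq_norm] at ht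
      rw [mem_ofPred, Complex.log_re]
      exact Real.log_lt_log (norm_pos_iff.2 ht0) ht
  rw [← himg]
  exact (convex_halfSpace_re_lt _).isPreconnected.image _ (by fun_prop)

theorem exists_isPreconnected_subset_of_mem_cocompact (A : Set ℂ) (hA : A ∈ cocompact ℂ) :
    ∃ A' ∈ cocompact ℂ, A' ⊆ A ∧ IsPreconnected A' := by
  obtain ⟨R, hR, hRA⟩ : ∃ R : ℝ, 0 < R ∧ (closedBall 0 R)ᶜ ⊆ A := by
    rw [← Metric.cobounded_eq_cocompact] at hA
    obtain ⟨R, -, hRA⟩ := (Metric.hasBasis_cobounded_compl_closedBall (0 : ℂ)).mem_iff.1 hA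
    refine ⟨max R 1, by simp, subset_trans ?_ hRA⟩
    exact compl_subset_compl.2 (closedBall_subset_closedBall (le_max_left _ _))
  refine ⟨(closedBall 0 R)ᶜ, (isCompact_closedBall 0 R).compl_mem_cocompact, hRA, ?_⟩
  have himg : Complex.exp '' {ζ : ℂ | Real.log R < ζ.re} = (closedBall 0 R)ᶜ := by
    ext t
    simp only [mem_compl_iff, mem_closedBall_zero_iff, not_le]
    constructor
    · rintro ⟨ζ, hζ, rfl⟩
      rw [Complex.norm_exp]
      exact (Real.log_lt_iff_lt_exp hR).1 hζ
    · intro ht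
      have ht0 : t ≠ 0 := norm_pos_iff.1 (hR.trans ht)
      refine ⟨Complex.log t, ?_, Complex.exp_log ht0⟩
      rw [mem_ofPred, Complex.log_re]
      exact Real.log_lt_log hR ht
  rw [← himg]
  exact (convex_halfSpace_re_gt _).isPreconnected.image _ (by fun_prop)

/-- Winding number of `u - w` along circles going to an end where `u` has a finite limit. -/
theorem eventually_hasWinding_sub_of_tendsto_nhds {L : Filter ℂ} {R : Filter ℝ} {q b w : ℂ}
    {U : Set ℂ} {u : ℂ → ℂ} (hLR : ∀ A ∈ L, ∀ᶠ r in R, sphere q r ⊆ A) (hU : U ∈ L)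
    (hu : ContinuousOn u U) (hb : Tendsto u L (𝓝 b)) (hbw : b ≠ w) :
    ∀ᶠ r in R, HasWinding (fun t => u t - w) q r 0 := by
  have hpos : 0 < ‖b - w‖ := norm_pos_iff.2 (sub_ne_zero.2 hbw)
  filter_upwards [hLR _ hU, hLR _ (hb.eventually (ball_mem_nhds b hpos))] with r h1 h2
  refine (hasWinding_const (sub_ne_zero.2 hbw) q r).of_norm_sub_lt
    ((hu.mono h1).sub continuousOn_const) continuousOn_const fun t ht => ?_
  rw [sub_sub_sub_cancel_right, ← dist_eq_norm]
  exact h2 ht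

/-- Winding number of `u - w` along circles going to an end where `u` tends to infinity. -/
theorem eventually_hasWinding_sub_of_tendsto_cocompact {L : Filter ℂ} {R : Filter ℝ} {q : ℂ}
    (w : ℂ) {U : Set ℂ} {u : ℂ → ℂ} {p : ℤ} (hLR : ∀ A ∈ L, ∀ᶠ r in R, sphere q r ⊆ A)
    (hU : U ∈ L) (hu : ContinuousOn u U) (hb : Tendsto u L (cocompact ℂ))
    (hp : ∀ᶠ r in R, HasWinding u q r p) :
    ∀ᶠ r in R, HasWinding (fun t => u t - w) q r p := by
  filter_upwards [hLR _ hU, hLR _ (hb.eventually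
    (isCompact_closedBall (0 : ℂ) ‖w‖).compl_mem_cocompact), hp] with r h1 h2 h3
  refine h3.of_norm_sub_lt ((hu.mono h1).sub continuousOn_const) (hu.mono h1) fun t ht => ?_
  have := h2 ht
  rw [sub_sub_cancel_left, norm_neg]
  simpa using this

namespace IsCurveParam

variable {u v : ℂ → ℂ} {θ : ℂ × ℂ → ℂ} {Q : ℂ[X][Y]} {N : ℕ}

/-- Local index of the first coordinate over a generic value. -/
theorem exists_local_index (h : IsCurveParam u v θ Q N) {s : ℂ} (hs : s ∈ twicePuncturedPlane)
    (hw : IsGenericValue Q (u s)) :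
    ∃ n : ℤ, (n = 1 ∨ n = -1) ∧ ∀ᶠ t in 𝓝 s, ∀ᶠ r in 𝓝[>] (0 : ℝ),
      HasWinding (fun x => u x - u t) t r n := by
  obtain ⟨σ, hσs, ⟨O, hO, hσc, hσO⟩, hσu⟩ := h.exists_local_section hs hw
  obtain ⟨ρ, hρ, hρO⟩ := Metric.mem_nhds_iff.1 hO
  have hσinj : ∀ U ∈ ball (u s) ρ \ {u s}, σ U - s ≠ 0 := by
    rintro U ⟨hU, hne⟩ h0
    refine hne ?_
    rw [mem_singleton_iff, ← (hσO U (hρO hU)).2, sub_eq_zero.1 h0]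
  obtain ⟨k, f, hf, hσf⟩ := exists_zpow_mul_exp_of_punctured_ball (F := fun U => σ U - s) hρ
    ((hσc.mono fun U hU => hρO hU.1).sub continuousOn_const) hσinj
  have hnear : ∀ᶠ t in 𝓝 s, t ∈ twicePuncturedPlane ∧ σ (u t) = t ∧ u t ∈ ball (u s) ρ :=
    (isOpen_twicePuncturedPlane.eventually_mem hs).and
      (hσu.and ((h.continuousAt_fst hs).eventually (ball_mem_nhds _ hρ)))
  obtain ⟨r₀, hr₀, hball⟩ := Metric.eventually_nhds_iff_ball.1 hnear
  have hinj : ∀ a ∈ ball s r₀, ∀ b ∈ ball s r₀, u a = u b → a = b := fun a ha b hb hab => by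
    rw [← (hball a ha).2.1, ← (hball b hb).2.1, hab]
  have huc : ContinuousOn u (ball s r₀) := h.continuousOn_fst.mono fun t ht => (hball t ht).1
  have hdec : ∀ t ∈ ball s r₀, ∃ (n : ℤ) (g : ℂ → ℂ), ContinuousOn g (ball s r₀ \ {t}) ∧
      ∀ x ∈ ball s r₀ \ {t}, u x - u t = (x - t) ^ n * Complex.exp (g x) := by
    intro t ht
    obtain ⟨n, g, hg, hn⟩ := exists_prod_zpow_mul_exp (convex_ball s r₀) isOpen_ball {t}
      (by simpa using ht) (F := fun x => u x - u t)
      ((huc.mono sdiff_subset).sub continuousOn_const) (fun x hx => by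
        rw [sub_ne_zero]
        exact fun hxt => hx.2 (by simpa using hinj x hx.1 t ht hxt))
    exact ⟨n t, g, by simpa using hg, by simpa using hn⟩
  obtain ⟨n, g, hg, hn⟩ := hdec s (mem_ball_self hr₀)
  obtain ⟨r, hr0, hrr₀⟩ := exists_between hr₀
  have hsph : sphere s r ⊆ ball s r₀ \ {s} := fun t ht =>
    ⟨by rw [mem_ball, mem_sphere.1 ht]; exact hrr₀, ne_of_mem_sphere ht hr0.ne'⟩
  have hwind : HasWinding (fun x => u x - u s) s r n :=
    ⟨g, hg.mono hsph, fun t ht => hn t (hsph ht)⟩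
  have hmem : ∀ t ∈ sphere s r, u t ∈ ball (u s) ρ \ {u s} := fun t ht =>
    ⟨(hball t (hsph ht).1).2.2, fun h0 =>
      (hsph ht).2 (hinj t (hsph ht).1 s (mem_ball_self hr₀) h0)⟩
  have hnk : n * k = 1 := by
    have h1 : HasWinding (fun t => t - s) s r (n * k) := by
      have hfu : ContinuousOn (fun t => f (u t)) (sphere s r) :=
        hf.comp (huc.mono fun t ht => (hsph ht).1) hmem
      have h2 := (hwind.zpow k).mul hr0 (hasWinding_exp hfu)
      rw [add_zero] at h2
      refine h2.congr fun t ht => ?_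
      rw [← hσf _ (hmem t ht), (hball t (hsph ht).1).2.1]
    exact h1.unique hr0 (hasWinding_sub_center s r)
  refine ⟨n, Int.isUnit_iff.1 (IsUnit.of_mul_eq_one k hnk), ?_⟩
  have hne : (sphere s r).Nonempty := NormedSpace.sphere_nonempty.2 hr0.le
  obtain ⟨x₀, hx₀, hmin⟩ := (isCompact_sphere s r).exists_isMinOn hne
    (f := fun x => ‖u x - u s‖)
    ((huc.mono fun t ht => (hsph ht).1).sub continuousOn_const).norm
  have hδ : 0 < ‖u x₀ - u s‖ := norm_pos_iff.2 (sub_ne_zero.2 (hmem x₀ hx₀).2)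
  filter_upwards [ball_mem_nhds s hr0, (h.continuousAt_fst hs).eventually (ball_mem_nhds _ hδ)]
    with t ht htu
  have ht₀ : t ∈ ball s r₀ := ball_subset_ball hrr₀.le ht
  obtain ⟨n', g', hg', hn'⟩ := hdec t ht₀
  have hnt : ‖t - s‖ < r := by simpa [dist_eq_norm] using ht
  have h1 : HasWinding (fun x => u x - u t) s r n := by
    refine hwind.of_norm_sub_lt ((huc.mono fun t ht => (hsph ht).1).sub continuousOn_const)
      ((huc.mono fun t ht => (hsph ht).1).sub continuousOn_const) fun x hx => ?_
    refine lt_of_lt_of_le ?_ (isMinOn_iff.1 hmin x hx)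
    rw [sub_sub_sub_cancel_left, norm_sub_rev, ← dist_eq_norm]
    exact htu
  have hsubt : sphere s r ⊆ ball s r₀ \ {t} := fun x hx => ⟨(hsph hx).1, fun hxt => by
    rw [mem_singleton_iff.1 hxt, mem_sphere_iff_norm] at hx
    exact hnt.ne hx⟩
  have h2 : HasWinding (fun x => u x - u t) s r n' := by
    have := HasWinding.of_prod_zpow_mul_exp (F := fun x => u x - u t) hr0 {t} (fun _ => n')
      (by simpa using hnt.ne) (hg'.mono hsubt)
      (by simpa using fun x hx => hn' x (hsubt (by simpa using hx)))
    rwa [Finset.sum_filter, Finset.sum_singleton, if_pos hnt] at this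
  have h3 := HasWinding.eventually_of_prod_zpow_mul_exp (F := fun x => u x - u t) {t} (fun _ => n')
    (isOpen_ball.mem_nhds ht₀) (by simp) (by simpa using hg') (by simpa using hn')
  rwa [h2.unique hr0 h1] at h3

end IsCurveParam

theorem eventually_sphere_subset_of_mem_nhdsNE (p : ℂ) (A : Set ℂ) (hA : A ∈ 𝓝[≠] p) :
    ∀ᶠ r in 𝓝[>] (0 : ℝ), sphere p r ⊆ A := by
  obtain ⟨ε, hε, hball⟩ := Metric.mem_nhdsWithin_iff.1 hA
  filter_upwards [self_mem_nhdsWithin, nhdsWithin_le_nhds (Iio_mem_nhds hε)] with r hr hrε t ht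
  exact hball ⟨by rw [mem_ball, mem_sphere.1 ht]; exact hrε, ne_of_mem_sphere ht (ne_of_gt hr)⟩

theorem eventually_sphere_subset_of_mem_cocompact (p : ℂ) (A : Set ℂ) (hA : A ∈ cocompact ℂ) :
    ∀ᶠ r in (atTop : Filter ℝ), sphere p r ⊆ A := by
  rw [← Metric.cobounded_eq_cocompact] at hA
  obtain ⟨R, -, hRA⟩ := (Metric.hasBasis_cobounded_compl_closedBall p).mem_iff.1 hA
  filter_upwards [eventually_gt_atTop R] with r hr t ht
  refine hRA fun h => ?_
  rw [mem_closedBall, mem_sphere.1 ht] at h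
  exact absurd hr h.not_gt

theorem twicePuncturedPlane_mem_nhdsNE (p : ℂ) :
    twicePuncturedPlane ∈ 𝓝[≠] p := by
  have h1 : ∀ᶠ t in 𝓝 p, t ∉ ((({0, 1} : Finset ℂ) : Set ℂ) \ {p}) :=
    ((Finset.finite_toSet _).subset sdiff_subset).isClosed.isOpen_compl.mem_nhds (by simp)
  filter_upwards [self_mem_nhdsWithin, nhdsWithin_le_nhds h1] with t ht ht1
  exact ⟨mem_univ _, fun h => ht1 ⟨h, ht⟩⟩

theorem twicePuncturedPlane_mem_cocompact : twicePuncturedPlane ∈ cocompact ℂ := by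
  have : twicePuncturedPlane = ((({0, 1} : Finset ℂ) : Set ℂ))ᶜ := by
    ext t; simp [twicePuncturedPlane]
  rw [this]
  exact (Finset.finite_toSet _).isCompact.compl_mem_cocompact

namespace IsCurveParam

variable {u v : ℂ → ℂ} {θ : ℂ × ℂ → ℂ} {Q : ℂ[X][Y]} {N : ℕ}

/-- The local index of a nonconstant first coordinate is constant. -/
theorem exists_index (h : IsCurveParam u v θ Q N)
    (hnc : ∀ c, ∃ t ∈ twicePuncturedPlane, u t ≠ c) {B : Finset ℂ}
    (hB : ∀ w ∉ B, IsGenericValue Q w) :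
    ∃ ε : ℤ, (ε = 1 ∨ ε = -1) ∧ ∀ s ∈ twicePuncturedPlane, u s ∉ B →
      ∀ᶠ r in 𝓝[>] (0 : ℝ), HasWinding (fun x => u x - u s) s r ε := by
  let T : Set ℂ := {t ∈ twicePuncturedPlane | u t ∈ B}
  have hT : T.Finite := by
    refine (B.finite_toSet.biUnion fun b _ => h.finite_fiber hnc b).subset fun t ht => ?_
    simpa using (show t ∈ twicePuncturedPlane ∧ u t ∈ B from ht)
  have hgen : ∀ s ∈ twicePuncturedPlane \ T, IsGenericValue Q (u s) := fun s hs =>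
    hB _ fun hsB => hs.2 ⟨hs.1, hsB⟩
  have hex := fun s (hs : s ∈ twicePuncturedPlane \ T) => h.exists_local_index hs.1 (hgen s hs)
  choose! n hn1 hn2 using hex
  have hnc' : ContinuousOn n (twicePuncturedPlane \ T) := by
    intro s hs
    refine (tendsto_nhds_of_eventually_eq ?_)
    filter_upwards [self_mem_nhdsWithin, nhdsWithin_le_nhds (hn2 s hs)] with t ht htn
    obtain ⟨r, ⟨h1, h2⟩, hr⟩ :=
      ((htn.and (hn2 t ht).self_of_nhds).and self_mem_nhdsWithin).exists
    exact h2.unique hr h1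
  rcases (twicePuncturedPlane \ T).eq_empty_or_nonempty with he | ⟨s₀, hs₀⟩
  · refine ⟨1, Or.inl rfl, fun s hs hsB => ?_⟩
    have : s ∈ twicePuncturedPlane \ T := ⟨hs, fun h => hsB h.2⟩
    simp [he] at this
  · refine ⟨n s₀, hn1 s₀ hs₀, fun s hs hsB => ?_⟩
    have hs' : s ∈ twicePuncturedPlane \ T := ⟨hs, fun h => hsB h.2⟩
    rw [(isPreconnected_twicePuncturedPlane_diff hT).constant hnc' hs₀ hs']
    exact (hn2 s hs').self_of_nhds

/-- The winding number of `u - w` around an end does not depend on the generic value `w`. -/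
theorem exists_end_winding (h : IsCurveParam u v θ Q N) {B : Finset ℂ}
    (hB : ∀ w ∉ B, IsGenericValue Q w) {L : Filter ℂ} {R : Filter ℝ} {q : ℂ} {p : ℤ}
    (hL : ∀ A ∈ L, ∃ A' ∈ L, A' ⊆ A ∧ IsPreconnected A')
    (hLS : twicePuncturedPlane ∈ L)
    (hLK : ∀ K : Set ℂ, IsCompact K → K ⊆ twicePuncturedPlane → ∀ᶠ t in L, t ∉ K)
    (hLR : ∀ A ∈ L, ∀ᶠ r in R, sphere q r ⊆ A)
    (hp : ∀ᶠ r in R, HasWinding u q r p) :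
    ∃ k : ℤ, (k = 0 ∨ k = p) ∧ ∀ w ∉ B, ∀ᶠ r in R, HasWinding (fun t => u t - w) q r k := by
  have hprop : ∀ w ∉ B, ∃ O ∈ 𝓝 w, ∀ᶠ t in L, u t ∉ O := by
    intro w hw
    obtain ⟨O, hO, K, hK, hKS, hOK⟩ := h.exists_compact_preimage (hB w hw)
    refine ⟨O, hO, ?_⟩
    filter_upwards [hLS, hLK K hK hKS] with t h1 h2 h3
    exact h2 (hOK t h1 h3)
  rcases tendsto_of_eventually_notMem hL hLS h.continuousOn_fst B hprop with ⟨b, hb, hlim⟩ | hlim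
  · refine ⟨0, Or.inl rfl, fun w hw => ?_⟩
    exact eventually_hasWinding_sub_of_tendsto_nhds hLR hLS h.continuousOn_fst hlim
      (by rintro rfl; exact hw hb)
  · exact ⟨p, Or.inr rfl, fun w _ =>
      eventually_hasWinding_sub_of_tendsto_cocompact w hLR hLS h.continuousOn_fst hlim hp⟩

/-- The number of points in a generic fibre, counted with sign, is determined by winding numbers
at the ends. -/
theorem exists_card_fiber (h : IsCurveParam u v θ Q N)
    (hnc : ∀ c, ∃ t ∈ twicePuncturedPlane, u t ≠ c) {B : Finset ℂ}
    (hB : ∀ w ∉ B, IsGenericValue Q w) {p : ℤ} {a : ℂ → ℂ}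
    (ha : ContinuousOn a twicePuncturedPlane)
    (hu : ∀ t ∈ twicePuncturedPlane, u t = t ^ p * Complex.exp (a t)) :
    ∃ k : ℤ, (k = 0 ∨ k = p ∨ k = -p) ∧ ∀ w ∉ B, ∀ T : Finset ℂ,
      (∀ t, t ∈ T ↔ t ∈ twicePuncturedPlane ∧ u t = w) → (T.card : ℤ) = k := by
  classical
  obtain ⟨ε, hε, hind⟩ := h.exists_index hnc hB
  have hu' : ∀ t ∈ univ \ ((({0, 1} : Finset ℂ) : Set ℂ)), u t =
      (∏ q ∈ ({0, 1} : Finset ℂ), (t - q) ^ (if q = 0 then p else 0)) * Complex.exp (a t) := by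
    intro t ht
    rw [Finset.prod_pair zero_ne_one]
    simpa using hu t ht
  have hw0 : ∀ᶠ r in 𝓝[>] (0 : ℝ), HasWinding u 0 r p := by
    simpa using HasWinding.eventually_of_prod_zpow_mul_exp _ _ univ_mem
      (p := (0 : ℂ)) (by simp) ha hu'
  have hw1 : ∀ᶠ r in 𝓝[>] (0 : ℝ), HasWinding u 1 r 0 := by
    simpa using HasWinding.eventually_of_prod_zpow_mul_exp _ _ univ_mem
      (p := (1 : ℂ)) (by simp) ha hu'
  have hwinf : ∀ᶠ r in (atTop : Filter ℝ), HasWinding u 0 r p := by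
    filter_upwards [eventually_gt_atTop 1] with r hr
    refine ⟨a, ha.mono fun t ht => ?_, fun t ht => ?_⟩
    all_goals
      have htr : ‖t‖ = r := by simpa using ht
      have htS : t ∈ twicePuncturedPlane := by
        rw [mem_twicePuncturedPlane]
        refine ⟨?_, ?_⟩ <;> rintro rfl <;> simp at htr <;> linarith
    · exact htS
    · rw [sub_zero]; exact hu t htS
  have hLK : ∀ p : ℂ, p = 0 ∨ p = 1 → ∀ K : Set ℂ, IsCompact K → K ⊆ twicePuncturedPlane →
      ∀ᶠ t in 𝓝[≠] p, t ∉ K := by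
    intro p hp K hK hKS
    refine nhdsWithin_le_nhds (hK.isClosed.isOpen_compl.mem_nhds fun hpK => ?_)
    have := mem_twicePuncturedPlane.1 (hKS hpK)
    rcases hp with rfl | rfl
    · exact this.1 rfl
    · exact this.2 rfl
  obtain ⟨k₀, hk₀, hk₀w⟩ := h.exists_end_winding hB
    (exists_isPreconnected_subset_of_mem_nhdsNE 0) (twicePuncturedPlane_mem_nhdsNE 0)
    (hLK 0 (Or.inl rfl)) (eventually_sphere_subset_of_mem_nhdsNE 0) hw0
  obtain ⟨k₁, hk₁, hk₁w⟩ := h.exists_end_winding hB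
    (exists_isPreconnected_subset_of_mem_nhdsNE 1) (twicePuncturedPlane_mem_nhdsNE 1)
    (hLK 1 (Or.inr rfl)) (eventually_sphere_subset_of_mem_nhdsNE 1) hw1
  obtain ⟨k₂, hk₂, hk₂w⟩ := h.exists_end_winding hB
    exists_isPreconnected_subset_of_mem_cocompact twicePuncturedPlane_mem_cocompact
    (fun K hK _ => hK.compl_mem_cocompact) (eventually_sphere_subset_of_mem_cocompact 0) hwinf
  refine ⟨ε * (k₂ - k₀), ?_, fun w hw T hT => ?_⟩
  · rcases hε with rfl | rfl <;> rcases hk₀ with rfl | rfl <;> rcases hk₂ with rfl | rfl <;> simp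
  have hdisj : Disjoint ({0, 1} : Finset ℂ) T := by
    rw [Finset.disjoint_left]
    intro t ht htT
    exact ((hT t).1 htT).1.2 ht
  let P : Finset ℂ := {0, 1} ∪ T
  have hPS : univ \ (P : Set ℂ) ⊆ twicePuncturedPlane := by
    refine sdiff_subset_sdiff_right ?_
    simp only [P, Finset.coe_union]
    exact subset_union_left
  obtain ⟨n, g, hg, hF⟩ := exists_prod_zpow_mul_exp convex_univ isOpen_univ P (subset_univ _)
    (F := fun t => u t - w) ((h.continuousOn_fst.mono hPS).sub continuousOn_const)
    (fun t ht h0 => ht.2 (by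
      simp only [P, Finset.coe_union]
      exact Or.inr ((hT t).2 ⟨hPS ht, sub_eq_zero.1 h0⟩)))
  have hlocal : ∀ q ∈ P, ∀ k : ℤ, (∀ᶠ r in 𝓝[>] (0 : ℝ), HasWinding (fun t => u t - w) q r k) →
      n q = k := by
    intro q hq k hk
    obtain ⟨r, ⟨h1, h2⟩, hr⟩ := ((hk.and (HasWinding.eventually_of_prod_zpow_mul_exp P n
      univ_mem hq hg hF)).and self_mem_nhdsWithin).exists
    exact h2.unique hr h1
  have hn0 : n 0 = k₀ := hlocal 0 (by simp [P]) k₀ (hk₀w w hw)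
  have hn1 : n 1 = 0 := (hlocal 1 (by simp [P]) k₁ (hk₁w w hw)).trans (by simpa using hk₁)
  have hnT : ∀ s ∈ T, n s = ε := fun s hs => by
    obtain ⟨hsS, hsw⟩ := (hT s).1 hs
    refine hlocal s (by simp [P, hs]) ε ?_
    rw [← hsw]
    exact hind s hsS (hsw ▸ hw)
  have hinf : ∑ q ∈ P, n q = k₂ := by
    have hbig : ∀ᶠ r in (atTop : Filter ℝ), ∀ q ∈ P, ‖q‖ < r :=
      (Filter.eventually_all_finset P).2 fun q _ => eventually_gt_atTop _
    obtain ⟨r, ⟨h1, h2⟩, hr⟩ := (((hk₂w w hw).and hbig).and (eventually_gt_atTop 0)).exists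
    have hsub : sphere (0 : ℂ) r ⊆ univ \ (P : Set ℂ) := fun t ht =>
      ⟨mem_univ _, fun htP => (h2 t htP).ne (by simpa using ht)⟩
    have h3 := HasWinding.of_prod_zpow_mul_exp hr P n (p := 0)
      (fun q hq => by simpa using (h2 q hq).ne) (hg.mono hsub) fun t ht => hF t (hsub ht)
    rw [Finset.filter_true_of_mem fun q hq => by simpa using h2 q hq] at h3
    exact h3.unique hr h1
  rw [Finset.sum_union hdisj, Finset.sum_pair zero_ne_one, hn0, hn1, Finset.sum_congr rfl hnT,
    Finset.sum_const, nsmul_eq_mul] at hinf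
  rw [← hinf]
  rcases hε with rfl | rfl <;> simp

/-- A nonconstant first coordinate takes some generic value. -/
theorem exists_notMem_of_nonconstant (h : IsCurveParam u v θ Q N)
    (hnc : ∀ c, ∃ t ∈ twicePuncturedPlane, u t ≠ c) (B : Finset ℂ) :
    ∃ t ∈ twicePuncturedPlane, u t ∉ B := by
  by_contra! hall
  have h1 : (u '' twicePuncturedPlane).Subsingleton := by
    by_contra hnt
    refine (isPreconnected_twicePuncturedPlane.image u
      h.continuousOn_fst).infinite_of_nontrivial (not_subsingleton_iff.1 hnt)
      (B.finite_toSet.subset ?_)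
    rintro _ ⟨t, ht, rfl⟩
    exact hall t ht
  obtain ⟨t, ht, -⟩ := hnc 0
  obtain ⟨s, hs, hst⟩ := hnc (u t)
  exact hst (h1 ⟨s, hs, rfl⟩ ⟨t, ht, rfl⟩)

end IsCurveParam

theorem eq_zero_of_prod_zpow_eq_exp {P : Finset ℂ} {n : ℂ → ℤ} {g : ℂ → ℂ}
    (hg : ContinuousOn g (univ \ P))
    (h : ∀ t ∈ univ \ (P : Set ℂ), ∏ p ∈ P, (t - p) ^ n p = Complex.exp (g t)) :
    ∀ p ∈ P, n p = 0 := by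
  intro p hp
  have h1 := HasWinding.eventually_of_prod_zpow_mul_exp P n (F := fun _ => 1) univ_mem hp hg.neg
    fun t ht => by rw [h t ht, ← Complex.exp_add]; simp
  obtain ⟨r, h2, hr⟩ := (h1.and self_mem_nhdsWithin).exists
  exact h2.unique hr (hasWinding_const one_ne_zero p r)

theorem eq_zero_of_zpow_mul_zpow_eq_exp {i j : ℤ} {g : ℂ → ℂ}
    (hg : ContinuousOn g twicePuncturedPlane)
    (h : ∀ t ∈ twicePuncturedPlane, t ^ i * (t - 1) ^ j = Complex.exp (g t)) :
    i = 0 ∧ j = 0 := by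
  have := eq_zero_of_prod_zpow_eq_exp (P := {0, 1}) (n := fun q => if q = 0 then i else j) hg
    fun t ht => by
      rw [Finset.prod_pair zero_ne_one]
      simpa using h t ht
  exact ⟨by simpa using this 0 (by simp), by simpa using this 1 (by simp)⟩

theorem infinite_twicePuncturedPlane : twicePuncturedPlane.Infinite :=
  infinite_univ.sdiff (Finset.finite_toSet _)

theorem evalEval_eq_eval_map (Q : ℂ[X][Y]) (c W : ℂ) :
    Q.evalEval c W = (Q.map (Polynomial.evalRingHom c)).eval W := by
  rw [Polynomial.evalEval, ← Polynomial.coe_evalRingHom, ← Polynomial.eval₂_hom,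
    Polynomial.eval_map]
  simp

namespace IsCurveParam

variable {u v : ℂ → ℂ} {θ : ℂ × ℂ → ℂ} {Q : ℂ[X][Y]} {N : ℕ}

theorem exists_fst_ne (h : IsCurveParam u v θ Q 1) (c : ℂ) :
    ∃ t ∈ twicePuncturedPlane, u t ≠ c := by
  by_contra! hc
  have hinj : InjOn v twicePuncturedPlane := fun s hs t ht hst => by
    rw [← h.inv_apply s hs, ← h.inv_apply t ht, hc s hs, hc t ht, hst]
  have hc0 : c ≠ 0 := by
    obtain ⟨t, ht⟩ := infinite_twicePuncturedPlane.nonempty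
    exact hc t ht ▸ h.fst_ne_zero ht
  have hQ : ∀ W, Q.evalEval c W = 0 := by
    have : Q.map (Polynomial.evalRingHom c) = 0 := by
      refine Polynomial.eq_zero_of_infinite_isRoot _
        ((infinite_twicePuncturedPlane.image hinj).mono ?_)
      rintro _ ⟨t, ht, rfl⟩
      have := h.evalEval_eq_zero ht
      rw [hc t ht, evalEval_eq_eval_map] at this
      exact this
    intro W
    rw [evalEval_eq_eval_map, this, Polynomial.eval_zero]
  have hmem : ∀ W ∈ univ \ ((({0} : Finset ℂ)) : Set ℂ), (c, W) ∈ torusZeros Q :=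
    fun W hW => ⟨hc0, by simpa using hW, hQ W⟩
  have hσ : ContinuousOn (fun W => θ (c, W)) (univ \ ((({0} : Finset ℂ)) : Set ℂ)) :=
    h.continuousOn_inv.comp (by fun_prop) hmem
  have hσS := fun W hW => mem_twicePuncturedPlane.1 (h.mapsTo_inv (hmem W hW))
  obtain ⟨n₀, g₀, hg₀, hF₀⟩ := exists_prod_zpow_mul_exp convex_univ isOpen_univ _ (subset_univ _)
    hσ fun W hW => (hσS W hW).1
  obtain ⟨n₁, g₁, hg₁, hF₁⟩ := exists_prod_zpow_mul_exp convex_univ isOpen_univ _ (subset_univ _)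
    (hσ.sub (continuousOn_const (c := 1))) fun W hW => sub_ne_zero.2 (hσS W hW).2
  have hv : MapsTo v twicePuncturedPlane (univ \ ((({0} : Finset ℂ)) : Set ℂ)) := fun t ht => by
    simpa using h.snd_ne_zero ht
  have hθ : ∀ t ∈ twicePuncturedPlane, θ (c, v t) = t := fun t ht => by
    rw [← hc t ht]; exact h.inv_apply t ht
  have hz : ∀ t ∈ twicePuncturedPlane, t = v t ^ n₀ 0 * Complex.exp (g₀ (v t)) := fun t ht => by
    simpa [hθ t ht] using hF₀ (v t) (hv ht)
  have ho : ∀ t ∈ twicePuncturedPlane, t - 1 = v t ^ n₁ 0 * Complex.exp (g₁ (v t)) :=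
    fun t ht => by simpa [hθ t ht] using hF₁ (v t) (hv ht)
  have hg₀' := hg₀.comp h.continuousOn_snd hv
  have hg₁' := hg₁.comp h.continuousOn_snd hv
  have hn := eq_zero_of_zpow_mul_zpow_eq_exp (i := n₁ 0) (j := -n₀ 0)
    (g := fun t => (n₁ 0 : ℤ) * g₀ (v t) + (-n₀ 0 : ℤ) * g₁ (v t))
    ((continuousOn_const.mul hg₀').add (continuousOn_const.mul hg₁')) fun t ht => by
      have hvt := h.snd_ne_zero ht
      rw [ho t ht, Complex.exp_add, Complex.exp_int_mul, Complex.exp_int_mul]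
      nth_rewrite 1 [hz t ht]
      rw [mul_zpow, mul_zpow, ← zpow_mul, ← zpow_mul, mul_mul_mul_comm, ← zpow_add₀ hvt]
      have : n₀ 0 * n₁ 0 + n₁ 0 * -n₀ 0 = 0 := by ring
      rw [this, zpow_zero, one_mul]
  have := eq_zero_of_zpow_mul_zpow_eq_exp (i := 1) (j := 0) hg₀' fun t ht => by
    have := hz t ht
    rw [neg_eq_zero.1 hn.2, zpow_zero, one_mul] at this
    simpa using this
  simp at this

theorem false_of_fst_eq_exp (h : IsCurveParam u v θ Q 1) {a : ℂ → ℂ}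
    (ha : ContinuousOn a twicePuncturedPlane)
    (hu : ∀ t ∈ twicePuncturedPlane, u t = Complex.exp (a t)) : False := by
  obtain ⟨B, -, hB⟩ := exists_finset_isGenericValue h.coeff_zero_ne_zero
  obtain ⟨k, hk, hcard⟩ := h.exists_card_fiber h.exists_fst_ne hB (p := 0) ha (by simpa using hu)
  obtain ⟨t, ht, htB⟩ := h.exists_notMem_of_nonconstant h.exists_fst_ne B
  have hfin := h.finite_fiber h.exists_fst_ne (u t)
  have hc := hcard (u t) htB hfin.toFinset (by simp)
  have hk0 : k = 0 := by simpa using hk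
  rw [hk0, Int.natCast_eq_zero, Finset.card_eq_zero] at hc
  have : t ∈ hfin.toFinset := by simp [ht]
  simp [hc] at this

theorem exists_fst_ne_of_winding (h : IsCurveParam u v θ Q N) {a : ℂ → ℂ}
    (ha : ContinuousOn a twicePuncturedPlane)
    (hu : ∀ t ∈ twicePuncturedPlane, u t = t * Complex.exp (a t)) (c : ℂ) :
    ∃ t ∈ twicePuncturedPlane, u t ≠ c := by
  by_contra! hc
  have hc0 : c ≠ 0 := by
    obtain ⟨t, ht⟩ := infinite_twicePuncturedPlane.nonempty
    exact hc t ht ▸ h.fst_ne_zero ht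
  have := eq_zero_of_zpow_mul_zpow_eq_exp (i := 1) (j := 0)
    (g := fun t => Complex.log c - a t) (continuousOn_const.sub ha) fun t ht => by
      rw [Complex.exp_sub, Complex.exp_log hc0, ← hc t ht, hu t ht]
      simp
  simp at this

theorem existsUnique_preimage (h : IsCurveParam u v θ Q N) {a : ℂ → ℂ}
    (ha : ContinuousOn a twicePuncturedPlane)
    (hu : ∀ t ∈ twicePuncturedPlane, u t = t * Complex.exp (a t)) {B : Finset ℂ}
    (hB : ∀ w ∉ B, IsGenericValue Q w) :
    ∀ w ∉ B, ∃! t, t ∈ twicePuncturedPlane ∧ u t = w := by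
  have hnc := h.exists_fst_ne_of_winding ha hu
  obtain ⟨k, hk, hcard⟩ := h.exists_card_fiber hnc hB (p := 1) ha (by simpa using hu)
  have hcard' : ∀ w ∉ B, ((h.finite_fiber hnc w).toFinset.card : ℤ) = k :=
    fun w hw => hcard w hw _ (by simp)
  have hk1 : k = 1 := by
    obtain ⟨t, ht, htB⟩ := h.exists_notMem_of_nonconstant hnc B
    have : 0 < (h.finite_fiber hnc (u t)).toFinset.card :=
      Finset.card_pos.2 ⟨t, by simp [ht]⟩
    have := hcard' _ htB
    omega
  intro w hw
  have := hcard' w hw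
  rw [hk1, Nat.cast_eq_one, Finset.card_eq_one_iff_existsUnique] at this
  simpa using this

end IsCurveParam

theorem Polynomial.exists_norm_eval_le (p : ℂ[X]) :
    ∃ q : ℝ[X], ∀ z, ‖p.eval z‖ ≤ q.eval ‖z‖ := by
  refine ⟨∑ i ∈ Finset.range (p.natDegree + 1), C ‖p.coeff i‖ * X ^ i, fun z => ?_⟩
  rw [Polynomial.eval_eq_sum_range, Polynomial.eval_finsetSum]
  refine (norm_sum_le _ _).trans_eq (Finset.sum_congr rfl fun i _ => ?_)
  simp

/-- An entire function of polynomial growth is a polynomial. -/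
theorem Differentiable.exists_polynomial_of_norm_le {f : ℂ → ℂ} (hf : Differentiable ℂ f)
    (q : ℝ[X]) (hq : ∀ z, ‖f z‖ ≤ q.eval ‖z‖) : ∃ p : ℂ[X], ∀ z, f z = p.eval z := by
  have hd : ∀ m, q.natDegree < m → iteratedDeriv m f 0 = 0 := by
    intro m hm
    have hlim : Tendsto (fun R : ℝ => m.factorial * (q.eval R / R ^ m)) atTop (𝓝 0) := by
      have h1 : q.degree < (X ^ m : ℝ[X]).degree := by
        rw [Polynomial.degree_X_pow]
        exact Polynomial.degree_le_natDegree.trans_lt (by exact_mod_cast hm)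
      simpa using (Polynomial.div_tendsto_atTop_zero_of_degree_lt q (X ^ m) h1).const_mul
        (m.factorial : ℝ)
    refine norm_le_zero_iff.1 (ge_of_tendsto hlim ?_)
    filter_upwards [eventually_gt_atTop 0] with R hR
    rw [← mul_div_assoc]
    refine Complex.norm_iteratedDeriv_le_of_forall_mem_sphere_norm_le m hR hf.diffContOnCl
      fun z hz => ?_
    rw [← mem_sphere_zero_iff_norm.1 hz]
    exact hq z
  refine ⟨∑ i ∈ Finset.range (q.natDegree + 1),
    C ((i.factorial : ℂ)⁻¹ * iteratedDeriv i f 0) * X ^ i, fun z => ?_⟩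
  rw [← Complex.taylorSeries_eq_of_entire' 0 z hf, Polynomial.eval_finsetSum,
    tsum_eq_sum (s := Finset.range (q.natDegree + 1)) fun i hi => by
      rw [hd i (by simpa using hi)]; simp]
  simp

/-- A function holomorphic off a finite set and bounded by a continuous function is holomorphic
after multiplication by a polynomial with double zeros at the exceptional points. -/
theorem differentiable_eval_prod_sq_mul {B : Finset ℂ} {F : ℂ → ℂ} {K : ℂ → ℝ}
    (hK : Continuous K) (hF : ∀ w ∉ B, DifferentiableAt ℂ F w) (hFK : ∀ w ∉ B, ‖F w‖ ≤ K w) :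
    Differentiable ℂ fun z => (∏ b ∈ B, (X - C b) ^ 2 : ℂ[X]).eval z * F z := by
  classical
  intro w
  by_cases hw : w ∈ B
  · rw [← Finset.mul_prod_erase B _ hw]
    set R : ℂ[X] := ∏ b ∈ B.erase w, (X - C b) ^ 2 with hR
    refine HasDerivAt.differentiableAt (f' := 0) ?_
    rw [hasDerivAt_iff_tendsto_slope]
    have hlim : Tendsto (fun z => ‖z - w‖ * (‖R.eval z‖ * K z)) (𝓝[≠] w) (𝓝 0) := by
      have : Continuous fun z => ‖z - w‖ * (‖R.eval z‖ * K z) := by fun_prop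
      simpa using (this.tendsto w).mono_left nhdsWithin_le_nhds
    refine squeeze_zero_norm' ?_ hlim
    have hB : ∀ᶠ z in 𝓝 w, z ∉ (B.erase w : Set ℂ) :=
      (Finset.finite_toSet _).isClosed.isOpen_compl.mem_nhds (by simp)
    filter_upwards [nhdsWithin_le_nhds hB, self_mem_nhdsWithin] with z hz hzw
    have hzw' : z - w ≠ 0 := sub_ne_zero.2 hzw
    have hzB : z ∉ B := fun h => hz (by simpa using ⟨h, hzw⟩)
    have : slope (fun z => ((X - C w) ^ 2 * R).eval z * F z) w z
        = (z - w) * (R.eval z * F z) := by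
      rw [slope_def_field]
      simp
      field_simp
    rw [this, norm_mul, norm_mul]
    gcongr
    exact hFK z hzB
  · exact (Polynomial.differentiableAt _).mul (hF w hw)

namespace IsCurveParam

variable {u v : ℂ → ℂ} {θ : ℂ × ℂ → ℂ} {Q : ℂ[X][Y]} {N : ℕ}

theorem exists_section (h : IsCurveParam u v θ Q N) {B : Finset ℂ}
    (hB : ∀ w ∉ B, IsGenericValue Q w)
    (huniq : ∀ w ∉ B, ∃! t, t ∈ twicePuncturedPlane ∧ u t = w) :
    ∃ ψ : ℂ → ℂ, ContinuousOn ψ (univ \ B) ∧ MapsTo ψ (univ \ B) twicePuncturedPlane ∧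
      (∀ w ∉ B, u (ψ w) = w) ∧ ∀ t ∈ twicePuncturedPlane, u t ∉ B → ψ (u t) = t := by
  have hex : ∀ w, ∃ t, w ∉ B → t ∈ twicePuncturedPlane ∧ u t = w := fun w => by
    by_cases hw : w ∈ B
    · exact ⟨0, fun h => absurd hw h⟩
    · obtain ⟨t, ht, -⟩ := huniq w hw
      exact ⟨t, fun _ => ht⟩
  choose ψ hψ using hex
  have hψu : ∀ t ∈ twicePuncturedPlane, u t ∉ B → ψ (u t) = t := fun t ht hB =>
    (huniq _ hB).unique (hψ _ hB) ⟨ht, rfl⟩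
  refine ⟨ψ, fun w hw => ?_, fun w hw => (hψ w (by simpa using hw)).1,
    fun w hw => (hψ w hw).2, hψu⟩
  have hwB : w ∉ B := by simpa using hw
  obtain ⟨hs, hsw⟩ := hψ w hwB
  obtain ⟨σ, -, ⟨O, hO, hσ, hσO⟩, -⟩ := h.exists_local_section hs (hsw.symm ▸ hB w hwB)
  rw [hsw] at hO
  have hBo : ∀ᶠ z in 𝓝 w, z ∉ (B : Set ℂ) :=
    (Finset.finite_toSet _).isClosed.isOpen_compl.mem_nhds (by simpa using hwB)
  refine ((hσ.continuousAt hO).congr ?_).continuousWithinAt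
  filter_upwards [hO, hBo] with z hz hzB
  have := hψu (σ z) (hσO z hz).1 (by rw [(hσO z hz).2]; simpa using hzB)
  rwa [(hσO z hz).2, eq_comm] at this

theorem exists_polynomial_relation (h : IsCurveParam u v θ Q N) {B : Finset ℂ}
    (hB : ∀ w ∉ B, IsGenericValue Q w) {ψ : ℂ → ℂ} (hψ : ContinuousOn ψ (univ \ B))
    (hψS : MapsTo ψ (univ \ B) twicePuncturedPlane) (huψ : ∀ w ∉ B, u (ψ w) = w) :
    ∃ L H : ℂ[X], L ≠ 0 ∧ ∀ w ∉ B, L.eval w * v (ψ w) = H.eval w := by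
  have hmem : ∀ w ∉ B, w ∈ univ \ (B : Set ℂ) := fun w hw => ⟨mem_univ _, by simpa using hw⟩
  have hopen : IsOpen (univ \ (B : Set ℂ)) := isOpen_univ.sdiff (Finset.finite_toSet _).isClosed
  have hzero : ∀ w ∉ B, Q.evalEval w (v (ψ w)) = 0 := fun w hw => by
    simpa [huψ w hw] using h.evalEval_eq_zero (hψS (hmem w hw))
  have hdiff : ∀ w ∉ B, DifferentiableAt ℂ (fun w => v (ψ w)) w := by
    intro w hw
    obtain ⟨ω, hω, -, -, -, hωuniq⟩ := (hB w hw).exists_branch _ (hzero w hw)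
    have hnhds := hopen.mem_nhds (hmem w hw)
    have hc : ContinuousAt (fun w => v (ψ w)) w :=
      ContinuousAt.comp (g := v) (h.continuousAt_snd (hψS (hmem w hw)))
        (hψ.continuousAt hnhds)
    refine hω.congr_of_eventuallyEq ?_
    filter_upwards [(continuousAt_id.prodMk hc).eventually hωuniq, hnhds] with z hz hzB
    exact (hz (hzero z (by simpa using hzB))).symm
  have hbound : ∀ w ∉ B, ‖Q.leadingCoeff.eval w * v (ψ w)‖ ≤
      ∑ i ∈ Finset.range (Q.natDegree + 1), ‖(Q.coeff i).eval w‖ :=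
    fun w hw => norm_eval_leadingCoeff_mul_le (hzero w hw)
  set D : ℂ[X] := ∏ b ∈ B, (X - C b) ^ 2 with hD
  have hDB : ∀ w ∈ B, D.eval w = 0 := fun w hw => by
    rw [hD, Polynomial.eval_prod]
    exact Finset.prod_eq_zero hw (by simp)
  have hentire : Differentiable ℂ fun w => D.eval w * (Q.leadingCoeff.eval w * v (ψ w)) :=
    differentiable_eval_prod_sq_mul
      (K := fun w => ∑ i ∈ Finset.range (Q.natDegree + 1), ‖(Q.coeff i).eval w‖)
      (by fun_prop) (fun w hw => (Polynomial.differentiableAt _).mul (hdiff w hw)) hbound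
  obtain ⟨d, hd⟩ := D.exists_norm_eval_le
  choose q hq using fun i => (Q.coeff i).exists_norm_eval_le
  obtain ⟨H, hH⟩ := hentire.exists_polynomial_of_norm_le
    (d * ∑ i ∈ Finset.range (Q.natDegree + 1), q i) fun w => by
      have hd0 : 0 ≤ d.eval ‖w‖ := (norm_nonneg _).trans (hd w)
      have hq0 : 0 ≤ ∑ i ∈ Finset.range (Q.natDegree + 1), (q i).eval ‖w‖ :=
        Finset.sum_nonneg fun i _ => (norm_nonneg _).trans (hq i w)
      rw [Polynomial.eval_mul, Polynomial.eval_finsetSum]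
      by_cases hw : w ∈ B
      · rw [hDB w hw, zero_mul, norm_zero]
        positivity
      · rw [norm_mul]
        exact mul_le_mul (hd w) ((hbound w hw).trans (Finset.sum_le_sum fun i _ => hq i w))
          (norm_nonneg _) hd0
  refine ⟨D * Q.leadingCoeff, H, mul_ne_zero ?_ ?_, fun w _ => ?_⟩
  · exact Finset.prod_ne_zero_iff.2 fun b _ => pow_ne_zero _ (Polynomial.X_sub_C_ne_zero b)
  · exact Polynomial.leadingCoeff_ne_zero.2 fun h0 => h.coeff_zero_ne_zero (by simp [h0])
  · rw [← hH w, Polynomial.eval_mul, mul_assoc]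

end IsCurveParam

theorem Polynomial.exists_eval_eq_of_roots {p : ℂ[X]} {b : ℂ} (hb : b ≠ 0)
    (hroots : ∀ w ∈ p.roots, w = 0 ∨ w = b) :
    ∃ i j : ℕ, ∀ w, p.eval w = p.leadingCoeff * (w ^ i * (w - b) ^ j) := by
  classical
  refine ⟨p.roots.count 0, p.roots.count b, fun w => ?_⟩
  rw [(IsAlgClosed.splits p).eval_eq_prod_roots, Finset.prod_multiset_map_count,
    Finset.prod_subset (s₂ := {0, b}) (fun w hw => by simpa using hroots w (by simpa using hw)) ?_,
    Finset.prod_pair hb.symm, sub_zero]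
  intro x _ hx
  rw [Multiset.count_eq_zero_of_notMem (by simpa using hx), pow_zero]

theorem exists_int_mul_add_mul_eq_zero (p q : ℤ) :
    ∃ i j : ℤ, (i ≠ 0 ∨ j ≠ 0) ∧ i * p + j * q = 0 := by
  by_cases hq : q = 0
  · exact ⟨0, 1, by simp, by simp [hq]⟩
  · exact ⟨q, -p, Or.inl hq, by ring⟩

theorem exists_zpow_mul_zpow_mul_exp {F : ℂ → ℂ} (hF : ContinuousOn F twicePuncturedPlane)
    (h0 : ∀ t ∈ twicePuncturedPlane, F t ≠ 0) :
    ∃ (m n : ℤ) (g : ℂ → ℂ), ContinuousOn g twicePuncturedPlane ∧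
      ∀ t ∈ twicePuncturedPlane, F t = t ^ m * (t - 1) ^ n * Complex.exp (g t) := by
  obtain ⟨n, g, hg, h⟩ := exists_prod_zpow_mul_exp convex_univ isOpen_univ {0, 1}
    (subset_univ _) hF h0
  refine ⟨n 0, n 1, g, hg, fun t ht => ?_⟩
  simpa [Finset.prod_pair] using h t ht

namespace IsCurveParam

variable {u v : ℂ → ℂ} {θ : ℂ × ℂ → ℂ} {Q : ℂ[X][Y]} {N : ℕ}

/-- The first coordinate omits at most one nonzero value. -/
theorem eq_of_fst_ne (h : IsCurveParam u v θ Q N) {a : ℂ → ℂ}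
    (ha : ContinuousOn a twicePuncturedPlane)
    (hu : ∀ t ∈ twicePuncturedPlane, u t = t * Complex.exp (a t))
    {B : Finset ℂ} {ψ : ℂ → ℂ} (hψ : ContinuousOn ψ (univ \ B))
    (hψS : MapsTo ψ (univ \ B) twicePuncturedPlane) (huψ : ∀ w ∉ B, u (ψ w) = w)
    {b c : ℂ} (hb : b ≠ 0) (hc : c ≠ 0) (hub : ∀ t ∈ twicePuncturedPlane, u t ≠ b)
    (huc : ∀ t ∈ twicePuncturedPlane, u t ≠ c) : b = c := by
  classical
  by_contra hbc
  obtain ⟨m, n, f, hf, hF⟩ := exists_zpow_mul_zpow_mul_exp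
    (h.continuousOn_fst.sub (continuousOn_const (c := b))) fun t ht => sub_ne_zero.2 (hub t ht)
  obtain ⟨m', n', g, hg, hG⟩ := exists_zpow_mul_zpow_mul_exp
    (h.continuousOn_fst.sub (continuousOn_const (c := c))) fun t ht => sub_ne_zero.2 (huc t ht)
  obtain ⟨j, k, hjk, hjk0⟩ := exists_int_mul_add_mul_eq_zero n n'
  have hprod : ∀ t ∈ twicePuncturedPlane,
      u t ^ (-(j * m + k * m')) * ((u t - b) ^ j * (u t - c) ^ k) =
        Complex.exp ((-(j * m + k * m') : ℤ) * a t + ((j : ℤ) * f t + (k : ℤ) * g t)) := by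
    intro t ht
    have ht' := mem_twicePuncturedPlane.1 ht
    have h1 : t - 1 ≠ 0 := sub_ne_zero.2 ht'.2
    rw [show u t - b = _ from hF t ht, show u t - c = _ from hG t ht, hu t ht]
    simp only [Complex.exp_add, Complex.exp_int_mul, mul_zpow, ← zpow_mul]
    have e1 : t ^ (-(j * m + k * m')) * (t ^ (m * j) * t ^ (m' * k)) = 1 := by
      rw [← zpow_add₀ ht'.1, ← zpow_add₀ ht'.1]
      exact (congrArg _ (by ring)).trans (zpow_zero t)
    have e2 : (t - 1) ^ (n * j) * (t - 1) ^ (n' * k) = 1 := by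
      rw [← zpow_add₀ h1]
      exact (congrArg _ (by linarith)).trans (zpow_zero (t - 1))
    linear_combination (Complex.exp (a t) ^ (-(j * m + k * m')) * Complex.exp (f t) ^ j *
      Complex.exp (g t) ^ k) * ((t - 1) ^ (n * j) * (t - 1) ^ (n' * k) * e1 + e2)
  let P : Finset ℂ := B ∪ {0, b, c}
  have hP : univ \ (P : Set ℂ) ⊆ univ \ (B : Set ℂ) :=
    sdiff_subset_sdiff_right (by simp only [P, Finset.coe_union]; exact subset_union_left)
  have hcomp : ∀ {G : ℂ → ℂ}, ContinuousOn G twicePuncturedPlane →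
      ContinuousOn (fun w => G (ψ w)) (univ \ P) :=
    fun hG => hG.comp (hψ.mono hP) (hψS.mono hP subset_rfl)
  have hzero := eq_zero_of_prod_zpow_eq_exp (P := P)
    (n := fun q => if q = 0 then -(j * m + k * m') else if q = b then j else if q = c then k else 0)
    (g := fun w => (-(j * m + k * m') : ℤ) * a (ψ w) + ((j : ℤ) * f (ψ w) + (k : ℤ) * g (ψ w)))
    ((continuousOn_const.mul (hcomp ha)).add
      ((continuousOn_const.mul (hcomp hf)).add (continuousOn_const.mul (hcomp hg)))) fun w hw => by
      rw [← hprod _ (hψS (hP hw)), huψ w (by simpa using hP hw),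
        ← Finset.prod_subset (s₁ := {0, b, c}) (by simp [P]),
        Finset.prod_insert (by simp [hb.symm, hc.symm]), Finset.prod_pair hbc]
      · simp [hb, hc, Ne.symm hbc]
      · intro x _ hx
        simp only [Finset.mem_insert, Finset.mem_singleton, not_or] at hx
        simp [hx.1, hx.2.1, hx.2.2]
  have hj : j = 0 := by simpa [hb] using hzero b (by simp [P])
  have hk : k = 0 := by simpa [hc, Ne.symm hbc] using hzero c (by simp [P])
  simp [hj, hk] at hjk

/-- The second coordinate is a monomial in the first coordinate and a translate of it. -/
theorem exists_monomial_relation (h : IsCurveParam u v θ Q N) {a a' : ℂ → ℂ}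
    (ha : ContinuousOn a twicePuncturedPlane)
    (hu : ∀ t ∈ twicePuncturedPlane, u t = t * Complex.exp (a t))
    (ha' : ContinuousOn a' twicePuncturedPlane)
    (hv : ∀ t ∈ twicePuncturedPlane, v t = (t - 1) * Complex.exp (a' t)) :
    ∃ (κ b : ℂ) (m k : ℤ) (B : Finset ℂ), κ ≠ 0 ∧ b ≠ 0 ∧ k ≠ 0 ∧
      (∀ t ∈ twicePuncturedPlane, u t ≠ b ∧ v t = κ * (u t ^ m * (u t - b) ^ k)) ∧
      ∀ w ∉ B, ∃ t ∈ twicePuncturedPlane, u t = w := by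
  classical
  obtain ⟨B, -, hB⟩ := exists_finset_isGenericValue h.coeff_zero_ne_zero
  have hnc := h.exists_fst_ne_of_winding ha hu
  obtain ⟨ψ, hψ, hψS, huψ, hψu⟩ := h.exists_section hB (h.existsUnique_preimage ha hu hB)
  obtain ⟨L, H, hL, hLH⟩ := h.exists_polynomial_relation hB hψ hψS huψ
  have hcop : ∃ L' H' : ℂ[X], IsCoprime L' H' ∧
      ∀ t ∈ twicePuncturedPlane, L'.eval (u t) * v t = H'.eval (u t) := by
    obtain ⟨L', H', hLL, hHH, hunit⟩ := extract_gcd L H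
    set d := gcd L H
    have hd : d ≠ 0 := fun h0 => hL (by rw [hLL, h0, zero_mul])
    refine ⟨L', H', (gcd_isUnit_iff L' H').1 hunit, ?_⟩
    have hT : (⋃ w ∈ B ∪ d.roots.toFinset, {t ∈ twicePuncturedPlane | u t = w}).Finite :=
      Set.Finite.biUnion (Finset.finite_toSet _) fun w _ => h.finite_fiber hnc w
    refine eqOn_of_eqOn_diff_finite isOpen_twicePuncturedPlane hT
      ((L'.continuous.comp_continuousOn h.continuousOn_fst).mul h.continuousOn_snd)
      (H'.continuous.comp_continuousOn h.continuousOn_fst) fun t ht => ?_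
    have ht' : u t ∉ B ∧ d.eval (u t) ≠ 0 := by
      refine ⟨fun hB => ht.2 ?_, fun h0 => ht.2 ?_⟩
      · exact mem_biUnion (by simp [hB]) ⟨ht.1, rfl⟩
      · exact mem_biUnion (by simp [hd, h0]) ⟨ht.1, rfl⟩
    have := hLH (u t) ht'.1
    rw [hψu t ht.1 ht'.1, hLL, hHH, Polynomial.eval_mul, Polynomial.eval_mul, mul_assoc] at this
    exact mul_left_cancel₀ ht'.2 this
  obtain ⟨L', H', hcop, hrel⟩ := hcop
  have homit : ∀ w, L'.eval w = 0 ∨ H'.eval w = 0 → ∀ t ∈ twicePuncturedPlane, u t ≠ w := by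
    rintro w hw t ht rfl
    obtain ⟨p, q, hpq⟩ := hcop
    have h1 := congrArg (Polynomial.eval (u t)) hpq
    have h2 := hrel t ht
    have h3 := h.snd_ne_zero ht
    rcases hw with hw | hw
    · rw [hw, zero_mul] at h2
      simp [hw, ← h2] at h1
    · rw [hw, mul_eq_zero, or_iff_left h3] at h2
      simp [hw, h2] at h1
  have hb : ∃ b ≠ 0, ∀ w, L'.eval w = 0 ∨ H'.eval w = 0 → w = 0 ∨ w = b := by
    by_cases hex : ∃ b ≠ 0, L'.eval b = 0 ∨ H'.eval b = 0
    · obtain ⟨b, hb, hbr⟩ := hex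
      refine ⟨b, hb, fun w hw => or_iff_not_imp_left.2 fun hw0 => ?_⟩
      exact h.eq_of_fst_ne ha hu hψ hψS huψ hw0 hb (homit w hw) (homit b hbr)
    · push Not at hex
      exact ⟨1, one_ne_zero, fun w hw => Or.inl (by_contra fun hw0 => by
        have := hex w hw0; tauto)⟩
  obtain ⟨b, hb0, hb⟩ := hb
  have hL0 : ∀ t ∈ twicePuncturedPlane, L'.eval (u t) ≠ 0 :=
    fun t ht h0 => homit _ (Or.inl h0) t ht rfl
  have hH0 : ∀ t ∈ twicePuncturedPlane, H'.eval (u t) ≠ 0 :=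
    fun t ht h0 => homit _ (Or.inr h0) t ht rfl
  obtain ⟨i, j, hij⟩ := Polynomial.exists_eval_eq_of_roots (p := L') hb0
    fun w hw => hb w (Or.inl (Polynomial.isRoot_of_mem_roots hw))
  obtain ⟨i', j', hij'⟩ := Polynomial.exists_eval_eq_of_roots (p := H') hb0
    fun w hw => hb w (Or.inr (Polynomial.isRoot_of_mem_roots hw))
  set l := L'.leadingCoeff
  set l' := H'.leadingCoeff
  have hl : l ≠ 0 ∧ l' ≠ 0 := by
    obtain ⟨t, ht⟩ := infinite_twicePuncturedPlane.nonempty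
    refine ⟨fun h0 => hL0 t ht ?_, fun h0 => hH0 t ht ?_⟩
    · rw [hij, h0, zero_mul]
    · rw [hij', h0, zero_mul]
  have hjj : j ≠ j' := by
    rintro rfl
    have := eq_zero_of_zpow_mul_zpow_eq_exp (i := i - i') (j := 1)
      (g := fun t => Complex.log (l' / l) + (i' - i : ℤ) * a t - a' t)
      ((continuousOn_const.add (continuousOn_const.mul ha)).sub ha') fun t ht => by
        have ht0 := (mem_twicePuncturedPlane.1 ht).1
        have hv' := hrel t ht
        have hne := hL0 t ht
        rw [hij] at hne
        rw [hij, hij', hv t ht] at hv'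
        have hub : (u t - b) ^ j ≠ 0 := right_ne_zero_of_mul (right_ne_zero_of_mul hne)
        have hexp : l * (u t ^ i * ((t - 1) * Complex.exp (a' t))) = l' * u t ^ i' :=
          mul_right_cancel₀ hub (by linear_combination hv')
        rw [Complex.exp_sub, Complex.exp_add, Complex.exp_log (div_ne_zero hl.2 hl.1),
          Complex.exp_int_mul, zpow_sub₀ ht0, zpow_sub₀ (Complex.exp_ne_zero _)]
        simp only [zpow_natCast, zpow_one]
        rw [hu t ht, mul_pow, mul_pow] at hexp
        have := Complex.exp_ne_zero (a t)
        have := Complex.exp_ne_zero (a' t)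
        have := hl.1
        field_simp
        linear_combination hexp
    simp at this
  have hub : ∀ t ∈ twicePuncturedPlane, u t ≠ b := by
    refine homit b ?_
    by_cases hj : j = 0
    · have hj' : j' ≠ 0 := fun h0 => hjj (hj.trans h0.symm)
      exact Or.inr (by simp [hij', hj'])
    · exact Or.inl (by simp [hij, hj])
  refine ⟨l' / l, b, i' - i, j' - j, B, div_ne_zero hl.2 hl.1, hb0,
    sub_ne_zero.2 (by exact_mod_cast hjj.symm), fun t ht => ⟨hub t ht, ?_⟩,
    fun w hw => ⟨ψ w, hψS ⟨mem_univ _, by simpa using hw⟩, huψ w hw⟩⟩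
  have hut := h.fst_ne_zero ht
  have hubt := sub_ne_zero.2 (hub t ht)
  have hrelt := hrel t ht
  have := hl.1
  rw [hij, hij'] at hrelt
  rw [zpow_sub₀ hut, zpow_sub₀ hubt]
  simp only [zpow_natCast]
  field_simp
  linear_combination hrelt

end IsCurveParam

/-- The zeros of a Laurent polynomial outside the coordinate axes. -/
def laurentZeros (c : (ℤ × ℤ) →₀ ℂ) : Set (ℂ × ℂ) :=
  {z | z.1 ≠ 0 ∧ z.2 ≠ 0 ∧ (∑ j ∈ c.support, c j * z.1 ^ j.1 * z.2 ^ j.2) = 0}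

/-- `(x, y)` is a homeomorphism of the twice punctured plane onto `V` with inverse `τ`. -/
structure IsHomeoParam (x y : ℂ → ℂ) (τ : ℂ × ℂ → ℂ) (V : Set (ℂ × ℂ)) : Prop where
  continuousOn_fst : ContinuousOn x twicePuncturedPlane
  continuousOn_snd : ContinuousOn y twicePuncturedPlane
  mem : ∀ t ∈ twicePuncturedPlane, (x t, y t) ∈ V
  continuousOn_inv : ContinuousOn τ V
  mapsTo_inv : MapsTo τ V twicePuncturedPlane
  inv_apply : ∀ t ∈ twicePuncturedPlane, τ (x t, y t) = t
  apply_inv : ∀ z ∈ V, (x (τ z), y (τ z)) = z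

theorem exists_isHomeoParam {V : Set (ℂ × ℂ)} (e : V ≃ₜ {w : ℂ | w ≠ 0 ∧ w ≠ 1}) :
    ∃ x y τ, IsHomeoParam x y τ V := by
  classical
  have hS : twicePuncturedPlane = {w : ℂ | w ≠ 0 ∧ w ≠ 1} :=
    Set.ext fun t => mem_twicePuncturedPlane
  rw [← hS] at e
  let φ : ℂ → ℂ × ℂ := fun t => if ht : t ∈ twicePuncturedPlane then e.symm ⟨t, ht⟩ else 0
  let τ : ℂ × ℂ → ℂ := fun z => if hz : z ∈ V then e ⟨z, hz⟩ else 0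
  have hφ : ∀ t (ht : t ∈ twicePuncturedPlane), φ t = e.symm ⟨t, ht⟩ := fun t ht => dif_pos ht
  have hτ : ∀ z (hz : z ∈ V), τ z = e ⟨z, hz⟩ := fun z hz => dif_pos hz
  have hφc : ContinuousOn φ twicePuncturedPlane := by
    rw [continuousOn_iff_continuous_domRestrict]
    refine (continuous_subtype_val.comp e.symm.continuous).congr fun t => ?_
    exact (hφ t t.2).symm
  refine ⟨fun t => (φ t).1, fun t => (φ t).2, τ, hφc.fst, hφc.snd, fun t ht => ?_, ?_,
    fun z hz => ?_, fun t ht => ?_, fun z hz => ?_⟩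
  · change φ t ∈ V
    rw [hφ t ht]
    exact (e.symm ⟨t, ht⟩).2
  · rw [continuousOn_iff_continuous_domRestrict]
    refine (continuous_subtype_val.comp e.continuous).congr fun z => ?_
    exact (hτ z z.2).symm
  · rw [hτ z hz]
    exact (e ⟨z, hz⟩).2
  · change τ (φ t) = t
    rw [hφ t ht, hτ _ (e.symm ⟨t, ht⟩).2]
    simp
  · change φ (τ z) = z
    rw [hτ z hz, hφ _ (e ⟨z, hz⟩).2]
    simp

theorem zpow_eq_one_of_monomial_eq_one {A B : ℂ} {m n r s : ℤ}
    (hA : A ≠ 0) (hB : B ≠ 0) (h₁ : A ^ m * B ^ n = 1) (h₂ : A ^ r * B ^ s = 1) :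
    A ^ (m * s - n * r) = 1 ∧ B ^ (m * s - n * r) = 1 := by
  have e₁ : ∀ k : ℤ, A ^ (m * k) * B ^ (n * k) = 1 := fun k => by
    rw [zpow_mul, zpow_mul, ← mul_zpow, h₁, one_zpow]
  have e₂ : ∀ k : ℤ, A ^ (r * k) * B ^ (s * k) = 1 := fun k => by
    rw [zpow_mul, zpow_mul, ← mul_zpow, h₂, one_zpow]
  constructor
  · calc A ^ (m * s - n * r) = A ^ (m * s) * B ^ (n * s) / (A ^ (r * n) * B ^ (s * n)) := by
          rw [zpow_sub₀ hA, mul_comm n r, mul_comm n s, mul_div_mul_right _ _ (zpow_ne_zero _ hB)]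
      _ = 1 := by rw [e₁, e₂, div_one]
  · calc B ^ (m * s - n * r) = A ^ (r * m) * B ^ (s * m) / (A ^ (m * r) * B ^ (n * r)) := by
          rw [zpow_sub₀ hB, mul_comm r m, mul_comm s m, mul_div_mul_left _ _ (zpow_ne_zero _ hA)]
      _ = 1 := by rw [e₁, e₂, div_one]

theorem pow_natAbs_eq_of_div_zpow_eq_one {a b : ℂ} (hb : b ≠ 0) {k : ℤ} (h : (a / b) ^ k = 1) :
    a ^ k.natAbs = b ^ k.natAbs := by
  have : (a / b) ^ k.natAbs = 1 := by
    rcases Int.natAbs_eq k with hk | hk <;> rw [hk] at h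
    · rwa [zpow_natCast] at h
    · rwa [zpow_neg, inv_eq_one, zpow_natCast] at h
  rwa [div_pow, div_eq_one_iff_eq (pow_ne_zero _ hb)] at this

namespace IsHomeoParam

variable {x y : ℂ → ℂ} {τ : ℂ × ℂ → ℂ} {c : (ℤ × ℤ) →₀ ℂ}

/-- Pulling back a curve under a monomial map. -/
theorem exists_isCurveParam (h : IsHomeoParam x y τ (laurentZeros c)) (hc : c ≠ 0)
    {m n r s : ℤ} (hD : m * s - n * r ≠ 0) {u v : ℂ → ℂ}
    (hu : ContinuousOn u twicePuncturedPlane) (hv : ContinuousOn v twicePuncturedPlane)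
    (hu0 : ∀ t ∈ twicePuncturedPlane, u t ≠ 0) (hv0 : ∀ t ∈ twicePuncturedPlane, v t ≠ 0)
    (hx : ∀ t ∈ twicePuncturedPlane, x t = u t ^ m * v t ^ n)
    (hy : ∀ t ∈ twicePuncturedPlane, y t = u t ^ r * v t ^ s) :
    ∃ Q, IsCurveParam u v (fun q => τ (q.1 ^ m * q.2 ^ n, q.1 ^ r * q.2 ^ s)) Q
      (m * s - n * r).natAbs := by
  obtain ⟨Q, hQ0, hQ⟩ := exists_polynomial_of_laurent_comp c hc hD
  have hmem : ∀ q ∈ torusZeros Q, (q.1 ^ m * q.2 ^ n, q.1 ^ r * q.2 ^ s) ∈ laurentZeros c :=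
    fun q ⟨h1, h2, h3⟩ => ⟨mul_ne_zero (zpow_ne_zero _ h1) (zpow_ne_zero _ h2),
      mul_ne_zero (zpow_ne_zero _ h1) (zpow_ne_zero _ h2), (hQ _ _ h1 h2).2 h3⟩
  have hroot : ∀ q ∈ torusZeros Q, ∀ t ∈ twicePuncturedPlane,
      (x t, y t) = (q.1 ^ m * q.2 ^ n, q.1 ^ r * q.2 ^ s) →
      u t ^ (m * s - n * r).natAbs = q.1 ^ (m * s - n * r).natAbs ∧
        v t ^ (m * s - n * r).natAbs = q.2 ^ (m * s - n * r).natAbs := by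
    rintro q ⟨h1, h2, -⟩ t ht hxy
    rw [Prod.mk.injEq, hx t ht, hy t ht] at hxy
    have hdiv : ∀ i j : ℤ, u t ^ i * v t ^ j = q.1 ^ i * q.2 ^ j →
        (u t / q.1) ^ i * (v t / q.2) ^ j = 1 := fun i j hij => by
      rw [div_zpow, div_zpow, div_mul_div_comm, hij,
        div_self (mul_ne_zero (zpow_ne_zero _ h1) (zpow_ne_zero _ h2))]
    have := zpow_eq_one_of_monomial_eq_one (div_ne_zero (hu0 t ht) h1) (div_ne_zero (hv0 t ht) h2)
      (hdiv _ _ hxy.1) (hdiv _ _ hxy.2)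
    exact ⟨pow_natAbs_eq_of_div_zpow_eq_one h1 this.1, pow_natAbs_eq_of_div_zpow_eq_one h2 this.2⟩
  have hcont : ∀ i j : ℤ, ContinuousOn (fun q : ℂ × ℂ => q.1 ^ i * q.2 ^ j) (torusZeros Q) :=
    fun i j => (_root_.continuousOn_fst.zpow₀ i fun q hq => Or.inl hq.1).mul
      (_root_.continuousOn_snd.zpow₀ j fun q hq => Or.inl hq.2.1)
  refine ⟨Q, hu, hv, fun t ht => ⟨hu0 t ht, hv0 t ht, ?_⟩,
    h.continuousOn_inv.comp ((hcont m n).prodMk (hcont r s)) hmem,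
    fun q hq => h.mapsTo_inv (hmem q hq), fun t ht => ?_,
    fun q hq => (hroot q hq _ (h.mapsTo_inv (hmem q hq)) (h.apply_inv _ (hmem q hq))).1,
    fun q hq => (hroot q hq _ (h.mapsTo_inv (hmem q hq)) (h.apply_inv _ (hmem q hq))).2,
    Int.natAbs_ne_zero.2 hD, hQ0⟩
  · rw [← hQ _ _ (hu0 t ht) (hv0 t ht), ← hx t ht, ← hy t ht]
    exact (h.mem t ht).2.2
  · change τ (u t ^ m * v t ^ n, u t ^ r * v t ^ s) = t
    rw [← hx t ht, ← hy t ht]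
    exact h.inv_apply t ht

end IsHomeoParam

theorem exists_isCoprime_mul_add_mul_eq_zero {m n r s : ℤ} (h : m * s - n * r = 0) :
    ∃ i j : ℤ, IsCoprime i j ∧ i * m + j * r = 0 ∧ i * n + j * s = 0 := by
  have hex : ∃ i j : ℤ, (i ≠ 0 ∨ j ≠ 0) ∧ i * m + j * r = 0 ∧ i * n + j * s = 0 := by
    by_cases hmr : r ≠ 0 ∨ m ≠ 0
    · exact ⟨r, -m, hmr.imp id neg_ne_zero.2, by ring, by linarith⟩
    · push Not at hmr
      obtain ⟨i, j, hij, h0⟩ := exists_int_mul_add_mul_eq_zero n s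
      exact ⟨i, j, hij, by simp [hmr], h0⟩
  obtain ⟨i, j, hij, h1, h2⟩ := hex
  obtain ⟨i', j', hi, hj, hu⟩ := extract_gcd i j
  set d := gcd i j
  have hd : d ≠ 0 := fun h0 => by simp [hi, hj, h0] at hij
  refine ⟨i', j', (gcd_isUnit_iff i' j').1 hu, mul_left_cancel₀ hd ?_, mul_left_cancel₀ hd ?_⟩
  · rw [hi, hj] at h1
    linear_combination h1
  · rw [hi, hj] at h2
    linear_combination h2

namespace IsHomeoParam

variable {x y : ℂ → ℂ} {τ : ℂ × ℂ → ℂ} {c : (ℤ × ℤ) →₀ ℂ}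

theorem det_ne_zero (h : IsHomeoParam x y τ (laurentZeros c)) (hc : c ≠ 0) {m n r s : ℤ}
    {f g : ℂ → ℂ} (hf : ContinuousOn f twicePuncturedPlane)
    (hg : ContinuousOn g twicePuncturedPlane)
    (hx : ∀ t ∈ twicePuncturedPlane, x t = t ^ m * (t - 1) ^ n * Complex.exp (f t))
    (hy : ∀ t ∈ twicePuncturedPlane, y t = t ^ r * (t - 1) ^ s * Complex.exp (g t)) :
    m * s - n * r ≠ 0 := by
  intro hD
  obtain ⟨i, j, ⟨a, b, hab⟩, h1, h2⟩ := exists_isCoprime_mul_add_mul_eq_zero hD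
  have hx0 : ∀ t ∈ twicePuncturedPlane, x t ≠ 0 := fun t ht => (h.mem t ht).1
  have hy0 : ∀ t ∈ twicePuncturedPlane, y t ≠ 0 := fun t ht => (h.mem t ht).2.1
  have hcont : ∀ i j : ℤ, ContinuousOn (fun t => x t ^ i * y t ^ j) twicePuncturedPlane :=
    fun i j => (h.continuousOn_fst.zpow₀ i fun t ht => Or.inl (hx0 t ht)).mul
      (h.continuousOn_snd.zpow₀ j fun t ht => Or.inl (hy0 t ht))
  have hne : ∀ i j : ℤ, ∀ t ∈ twicePuncturedPlane, x t ^ i * y t ^ j ≠ 0 :=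
    fun i j t ht => mul_ne_zero (zpow_ne_zero _ (hx0 t ht)) (zpow_ne_zero _ (hy0 t ht))
  have hmul : ∀ k l : ℤ, ∀ t ∈ twicePuncturedPlane,
      (x t ^ i * y t ^ j) ^ k * (x t ^ (-b) * y t ^ a) ^ l =
        x t ^ (i * k - b * l) * y t ^ (j * k + a * l) := fun k l t ht => by
    rw [mul_zpow, mul_zpow, ← zpow_mul, ← zpow_mul, ← zpow_mul, ← zpow_mul, sub_eq_add_neg,
      ← neg_mul, zpow_add₀ (hx0 t ht), zpow_add₀ (hy0 t ht)]
    ring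
  have hdet : a * i - -j * b = 1 := by linear_combination hab
  obtain ⟨Q, hQ⟩ := h.exists_isCurveParam hc (m := a) (n := -j) (r := b) (s := i)
    (by rw [hdet]; exact one_ne_zero) (hcont i j) (hcont (-b) a) (hne i j) (hne (-b) a)
    (fun t ht => by
      rw [hmul _ _ t ht, show i * a - b * -j = 1 by linear_combination hab,
        show j * a + a * -j = 0 by ring]
      simp)
    (fun t ht => by
      rw [hmul _ _ t ht, show i * b - b * i = 0 by ring,
        show j * b + a * i = 1 by linear_combination hab]
      simp)
  rw [hdet, Int.natAbs_one] at hQ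
  refine hQ.false_of_fst_eq_exp (a := fun t => (i : ℤ) * f t + (j : ℤ) * g t)
    ((continuousOn_const.mul hf).add (continuousOn_const.mul hg)) fun t ht => ?_
  have ht' := mem_twicePuncturedPlane.1 ht
  have e1 : t ^ (m * i) * t ^ (r * j) = 1 := by
    rw [← zpow_add₀ ht'.1]
    exact (congrArg _ (by linear_combination h1)).trans (zpow_zero t)
  have e2 : (t - 1) ^ (n * i) * (t - 1) ^ (s * j) = 1 := by
    rw [← zpow_add₀ (sub_ne_zero.2 ht'.2)]
    exact (congrArg _ (by linear_combination h2)).trans (zpow_zero (t - 1))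
  rw [hx t ht, hy t ht]
  simp only [Complex.exp_add, Complex.exp_int_mul, mul_zpow, ← zpow_mul]
  linear_combination (Complex.exp (f t) ^ i * Complex.exp (g t) ^ j) *
    ((t - 1) ^ (n * i) * (t - 1) ^ (s * j) * e1 + e2)

/-- The coordinates of a parametrised curve are monomials in a function and a translate of it. -/
theorem exists_monomial (h : IsHomeoParam x y τ (laurentZeros c)) (hc : c ≠ 0) :
    ∃ (u : ℂ → ℂ) (μ b : ℂ) (α β γ δ : ℤ) (B : Finset ℂ), μ ≠ 0 ∧ b ≠ 0 ∧
      (∀ t ∈ twicePuncturedPlane, u t ≠ 0 ∧ u t ≠ b ∧ x t = u t ^ α * (μ * (u t - b)) ^ β ∧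
        y t = u t ^ γ * (μ * (u t - b)) ^ δ) ∧
      ∀ w ∉ B, ∃ t ∈ twicePuncturedPlane, u t = w := by
  obtain ⟨m, n, f, hf, hx⟩ := exists_zpow_mul_zpow_mul_exp h.continuousOn_fst
    fun t ht => (h.mem t ht).1
  obtain ⟨r, s, g, hg, hy⟩ := exists_zpow_mul_zpow_mul_exp h.continuousOn_snd
    fun t ht => (h.mem t ht).2.1
  have hD := h.det_ne_zero hc hf hg hx hy
  set D := m * s - n * r with hDdef
  have hDC : (D : ℂ) ≠ 0 := Int.cast_ne_zero.2 hD
  have hDC' : (m : ℂ) * s - n * r = D := by push_cast [hDdef]; rfl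
  let a : ℂ → ℂ := fun t => (s * f t - n * g t) / D
  let a' : ℂ → ℂ := fun t => (m * g t - r * f t) / D
  have ha : ContinuousOn a twicePuncturedPlane :=
    ((continuousOn_const.mul hf).sub (continuousOn_const.mul hg)).div_const _
  have ha' : ContinuousOn a' twicePuncturedPlane :=
    ((continuousOn_const.mul hg).sub (continuousOn_const.mul hf)).div_const _
  let u : ℂ → ℂ := fun t => t * Complex.exp (a t)
  let v : ℂ → ℂ := fun t => (t - 1) * Complex.exp (a' t)
  have hmul : ∀ i j t, u t ^ i * v t ^ j =
      t ^ i * (t - 1) ^ j * Complex.exp ((i : ℤ) * a t + (j : ℤ) * a' t) := fun i j t => by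
    simp only [u, v, mul_zpow, Complex.exp_add, Complex.exp_int_mul]
    ring
  have hxu : ∀ t ∈ twicePuncturedPlane, x t = u t ^ m * v t ^ n := fun t ht => by
    rw [hmul, hx t ht]
    congr 2
    simp only [a, a']
    field_simp
    linear_combination (-f t) * hDC'
  have hyu : ∀ t ∈ twicePuncturedPlane, y t = u t ^ r * v t ^ s := fun t ht => by
    rw [hmul, hy t ht]
    congr 2
    simp only [a, a']
    field_simp
    linear_combination (-g t) * hDC'
  have hu0 : ∀ t ∈ twicePuncturedPlane, u t ≠ 0 := fun t ht =>
    mul_ne_zero (mem_twicePuncturedPlane.1 ht).1 (Complex.exp_ne_zero _)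
  obtain ⟨Q, hQ⟩ := h.exists_isCurveParam hc hD (u := u) (v := v)
    (continuousOn_id.mul ha.cexp) ((continuousOn_id.sub continuousOn_const).mul ha'.cexp) hu0
    (fun t ht => mul_ne_zero (sub_ne_zero.2 (mem_twicePuncturedPlane.1 ht).2)
      (Complex.exp_ne_zero _)) hxu hyu
  obtain ⟨κ, b, e, k, B, hκ, hb, hk, huv, hB⟩ :=
    hQ.exists_monomial_relation ha (fun _ _ => rfl) ha' (fun _ _ => rfl)
  have hkC : (k : ℂ) ≠ 0 := Int.cast_ne_zero.2 hk
  let μ := Complex.exp (Complex.log κ / k)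
  have hμ : μ ^ k = κ := by
    rw [← Complex.exp_int_mul, mul_div_cancel₀ _ hkC, Complex.exp_log hκ]
  have key : ∀ i j : ℤ, ∀ t ∈ twicePuncturedPlane,
      u t ^ i * v t ^ j = u t ^ (i + e * j) * (μ * (u t - b)) ^ (k * j) := fun i j t ht => by
    rw [(huv t ht).2, ← hμ, zpow_add₀ (hu0 t ht), zpow_mul, zpow_mul]
    simp only [mul_zpow]
    ring
  exact ⟨u, μ, b, m + e * n, k * n, r + e * s, k * s, B, Complex.exp_ne_zero _, hb,
    fun t ht => ⟨hu0 t ht, (huv t ht).1, (hxu t ht).trans (key _ _ t ht),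
      (hyu t ht).trans (key _ _ t ht)⟩, hB⟩

end IsHomeoParam

/-- Let `V ⊆ (ℂ*)²` be an algebraic curve homeomorphic to a sphere with
3 punctures.  Then there exists a multiplicative group endomorphism
`M : (ℂ*)² → (ℂ*)²` (a monomial map `(z₁,z₂) ↦ (z₁^α z₂^β, z₁^γ z₂^δ)`) and a line
`ℂΛ = {(z₁,z₂) ∈ (ℂ*)² | b₁z₁ + b₂z₂ + b₀ = 0}` with `b₀, b₁, b₂ ∈ ℂ*` such that
`V = M(ℂΛ)`. -/
theorem thrice_punctured_curve_is_monomial_image_of_line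
    (c : (ℤ × ℤ) →₀ ℂ) (hc : c ≠ 0)
    (V : Set (ℂ × ℂ))
    -- `V` is an algebraic curve in `(ℂ*)²`, cut out by a Laurent polynomial
    (hV : V = {z : ℂ × ℂ | z.1 ≠ 0 ∧ z.2 ≠ 0 ∧
      (∑ j ∈ c.support, c j * z.1 ^ j.1 * z.2 ^ j.2) = 0})
    -- `V` is homeomorphic to a sphere punctured 3 times
    (hhomeo : Nonempty (V ≃ₜ {w : ℂ | w ≠ 0 ∧ w ≠ 1})) :
    ∃ (α β γ δ : ℤ) (b₀ b₁ b₂ : ℂ), b₀ ≠ 0 ∧ b₁ ≠ 0 ∧ b₂ ≠ 0 ∧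
      V = (fun z : ℂ × ℂ => (z.1 ^ α * z.2 ^ β, z.1 ^ γ * z.2 ^ δ)) ''
        {z : ℂ × ℂ | z.1 ≠ 0 ∧ z.2 ≠ 0 ∧ b₁ * z.1 + b₂ * z.2 + b₀ = 0} := by
  classical
  obtain ⟨e⟩ := hhomeo
  obtain ⟨x, y, τ, h⟩ := exists_isHomeoParam e
  subst hV
  obtain ⟨u, μ, b, α, β, γ, δ, B, hμ, hb, hxy, hB⟩ := IsHomeoParam.exists_monomial h hc
  refine ⟨α, β, γ, δ, μ * b, -μ, 1, mul_ne_zero hμ hb, neg_ne_zero.2 hμ, one_ne_zero, ?_⟩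
  apply Subset.antisymm
  · intro z hz
    have ht := h.mapsTo_inv hz
    obtain ⟨hu0, hub, hx, hy⟩ := hxy _ ht
    refine ⟨(u (τ z), μ * (u (τ z) - b)), ⟨hu0, mul_ne_zero hμ (sub_ne_zero.2 hub), by ring⟩, ?_⟩
    exact (Prod.ext hx.symm hy.symm).trans (h.apply_inv z hz)
  · rintro _ ⟨⟨w, z⟩, ⟨hw, hz, hline⟩, rfl⟩
    dsimp only at hw hz hline ⊢
    obtain rfl : z = μ * (w - b) := by linear_combination hline
    refine ⟨mul_ne_zero (zpow_ne_zero _ hw) (zpow_ne_zero _ hz),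
      mul_ne_zero (zpow_ne_zero _ hw) (zpow_ne_zero _ hz), ?_⟩
    let U : Set ℂ := {w | w ≠ 0 ∧ μ * (w - b) ≠ 0}
    have hU : IsOpen U := (isOpen_ne_fun continuous_id continuous_const).inter
      (isOpen_ne_fun (by fun_prop) continuous_const)
    have hcont : ∀ i j : ℤ, ContinuousOn (fun w => w ^ i * (μ * (w - b)) ^ j) U := fun i j =>
      (continuousOn_id.zpow₀ i fun w hw => Or.inl hw.1).mul
        (ContinuousOn.zpow₀ (by fun_prop) j fun w hw => Or.inl hw.2)
    have hne : ∀ i j : ℤ, ∀ w ∈ U, w ^ i * (μ * (w - b)) ^ j ≠ 0 := fun i j w hw =>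
      mul_ne_zero (zpow_ne_zero _ hw.1) (zpow_ne_zero _ hw.2)
    refine eqOn_of_eqOn_diff_finite hU B.finite_toSet (g := fun _ => 0)
      (f := fun w => ∑ j ∈ c.support, c j * (w ^ α * (μ * (w - b)) ^ β) ^ j.1 *
        (w ^ γ * (μ * (w - b)) ^ δ) ^ j.2)
      (continuousOn_finsetSum _ fun j _ => (continuousOn_const.mul
        ((hcont α β).zpow₀ _ fun w hw => Or.inl (hne α β w hw))).mul
          ((hcont γ δ).zpow₀ _ fun w hw => Or.inl (hne γ δ w hw)))
      continuousOn_const (fun w hw => ?_) (show w ∈ U from ⟨hw, hz⟩)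
    obtain ⟨t, ht, rfl⟩ := hB w (by simpa using hw.2)
    obtain ⟨-, -, hx, hy⟩ := hxy t ht
    beta_reduce
    rw [← hx, ← hy]
    exact (h.mem t ht).2.2
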